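/- arXiv:1907.05658 — 2 statements merged into one kernel-verified Lean document; each statement's English description precedes it below -/
import Mathlib

section
/- Let N ∈ ℕ and C > 0, and for each j ∈ ℕ let a_j(y) = Σ_{m=0}^N a_{j,m}·e^{−2πi m y} be a trigonometric polynomial of degree at most N with a_j(0) = 1 and sup_{y∈ℝ}|a_j(y)| ≤ C. Let φ : ℝ → ℂ be continuous, integrable and compactly supported with φ̂(z) = Π_{j=1}^∞ a_j(2^{−j} z) for all z ∈ ℂ (pointwise limit of partial products). Let α ∈ ℂ and suppose there exist C' > 0 and q ∈ (0,1) such that |φ̂(α + ℓ)| ≤ C'·q^{|ℓ|} for all ℓ ∈ ℤ. Then the set { ℓ ∈ ℤ : φ̂(α + ℓ) ≠ 0 } contains at most N elements. -/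
open MeasureTheory

/-- The Fourier transform of `φ`, analytically extended to `ℂ`:
`φ̂(z) = ∫_ℝ φ(x)·e^{−2πi x z} dx`. -/
noncomputable def fourierExt (φ : ℝ → ℂ) (z : ℂ) : ℂ :=
  ∫ x : ℝ, φ x * Complex.exp (-(2 * (Real.pi : ℂ) * Complex.I * (x : ℂ) * z))

lemma aux_int_exp (k : ℤ) : ∫ x in (0:ℝ)..1, Complex.exp (2 * (Real.pi : ℂ) * Complex.I * (k : ℂ) * x)
    = if k = 0 then 1 else 0 := by
  split_ifs with h
  · simp [h]
  · have hc : 2 * (Real.pi : ℂ) * Complex.I * (k : ℂ) ≠ 0 := by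
      simp [Real.pi_ne_zero, h]
    rw [integral_exp_mul_complex hc]
    have : Complex.exp (2 * (Real.pi : ℂ) * Complex.I * (k : ℂ) * (1 : ℝ)) = 1 := by
      rw [Complex.exp_eq_one_iff]
      exact ⟨k, by push_cast; ring⟩
    rw [this]; simp

lemma aux_norm_exp (t y : ℝ) : ‖Complex.exp (-(2 * (Real.pi : ℂ) * Complex.I * (t : ℂ) * (y:ℂ)))‖ = 1 := by
  rw [Complex.norm_exp]; simp

lemma aux_coef (N : ℕ) (C : ℝ) (c : ℕ → ℂ) (A : ℂ → ℂ)
    (hA : ∀ y : ℂ, A y =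
      ∑ m ∈ Finset.range (N + 1), c m * Complex.exp (-(2 * (Real.pi : ℂ) * Complex.I * (m : ℂ) * y)))
    (hbd : ∀ y : ℝ, ‖A (y : ℂ)‖ ≤ C) (m : ℕ) (hm : m ∈ Finset.range (N + 1)) : ‖c m‖ ≤ C := by
  have h1 : c m = ∫ y in (0:ℝ)..1, A y * Complex.exp (2 * (Real.pi : ℂ) * Complex.I * (m : ℂ) * y) := by
    simp_rw [hA, Finset.sum_mul]
    rw [intervalIntegral.integral_finsetSum]
    · have : ∀ n ∈ Finset.range (N+1), (∫ y in (0:ℝ)..1, c n * Complex.exp (-(2 * (Real.pi : ℂ) * Complex.I * (n : ℂ) * y)) * Complex.exp (2 * (Real.pi : ℂ) * Complex.I * (m : ℂ) * y)) = if n = m then c n else 0 := by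
        intro n _
        have : ∀ y : ℝ, c n * Complex.exp (-(2 * (Real.pi : ℂ) * Complex.I * (n : ℂ) * y)) * Complex.exp (2 * (Real.pi : ℂ) * Complex.I * (m : ℂ) * y) = c n * Complex.exp (2 * (Real.pi : ℂ) * Complex.I * (((m:ℤ) - (n:ℤ) : ℤ) : ℂ) * y) := by
          intro y
          rw [mul_assoc, ← Complex.exp_add]
          congr 2; push_cast; ring
        simp_rw [this]
        rw [intervalIntegral.integral_const_mul, aux_int_exp]
        by_cases h : n = m
        · simp [h]
        · have : ((m:ℤ) - (n:ℤ) : ℤ) ≠ 0 := by omega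
          simp [h, this]
      rw [Finset.sum_congr rfl this]
      simp only [Finset.sum_ite_eq', hm, if_true]
    · intro n _
      apply Continuous.intervalIntegrable
      fun_prop
  rw [h1]
  have := intervalIntegral.norm_integral_le_of_norm_le_const (a := (0:ℝ)) (b := 1) (C := C)
    (f := fun y : ℝ => A y * Complex.exp (2 * (Real.pi : ℂ) * Complex.I * (m : ℂ) * y)) (by
      intro x _
      rw [norm_mul]
      have : ‖Complex.exp (2 * (Real.pi : ℂ) * Complex.I * (m : ℂ) * (x:ℂ))‖ = 1 := by
        rw [Complex.norm_exp]; simp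
      rw [this, mul_one]; exact hbd x)
  simpa using this

lemma aux_lip (N : ℕ) (C : ℝ) (hC : 0 < C) (c : ℕ → ℂ) (A : ℂ → ℂ)
    (hA : ∀ y : ℂ, A y =
      ∑ m ∈ Finset.range (N + 1), c m * Complex.exp (-(2 * (Real.pi : ℂ) * Complex.I * (m : ℂ) * y)))
    (hbd : ∀ y : ℝ, ‖A (y : ℂ)‖ ≤ C) (h0 : A 0 = 1) (y : ℝ) :
    ‖A y‖ ≤ 1 + (N + 1) * (C * (2 * Real.pi * N)) * |y| := by
  have h2 : A y - 1 = ∑ m ∈ Finset.range (N + 1), c m * (Complex.exp (-(2 * (Real.pi : ℂ) * Complex.I * (m : ℂ) * y)) - 1) := by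
    have h5 : A y - 1 = A y - A 0 := by rw [h0]
    rw [h5, hA, hA, ← Finset.sum_sub_distrib]
    apply Finset.sum_congr rfl
    intro m _
    simp; ring
  have h3 : ‖A y - 1‖ ≤ ∑ m ∈ Finset.range (N + 1), C * (2 * Real.pi * N * |y|) := by
    rw [h2]
    refine (norm_sum_le _ _).trans (Finset.sum_le_sum ?_)
    intro m hm
    rw [norm_mul]
    refine mul_le_mul (aux_coef N C c A hA hbd m hm) ?_ (norm_nonneg _) hC.le
    have := Real.norm_exp_I_mul_ofReal_sub_one_le (x := -(2 * Real.pi * m * y))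
    have e : Complex.I * ((-(2 * Real.pi * m * y) : ℝ) : ℂ) = -(2 * (Real.pi : ℂ) * Complex.I * (m : ℂ) * y) := by
      push_cast; ring
    rw [e] at this
    refine this.trans ?_
    have hmN : (m:ℝ) ≤ N := by
      have := Finset.mem_range.1 hm
      exact_mod_cast (by omega : m ≤ N)
    rw [Real.norm_eq_abs, abs_neg, abs_mul, abs_mul, abs_mul, abs_of_pos Real.pi_pos, Nat.abs_cast]
    have := Real.pi_pos
    norm_num
    gcongr
  have h4 : ‖A y‖ ≤ 1 + ‖A y - 1‖ := by
    have := norm_add_le (1:ℂ) (A y - 1)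
    simpa using this
  refine h4.trans ?_
  refine (add_le_add_right h3 1).trans (le_of_eq ?_)
  simp; ring

lemma aux_prod (N : ℕ) (C : ℝ) (hC : 0 < C)
    (coef : ℕ → ℕ → ℂ) (A : ℕ → ℂ → ℂ)
    (hA : ∀ j : ℕ, ∀ y : ℂ, A j y =
      ∑ m ∈ Finset.range (N + 1), coef j m * Complex.exp (-(2 * (Real.pi : ℂ) * Complex.I * (m : ℂ) * y)))
    (hA0 : ∀ j : ℕ, A j 0 = 1)
    (hAbd : ∀ j : ℕ, ∀ y : ℝ, ‖A j ((y : ℂ))‖ ≤ C) :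
    ∃ (D : ℝ) (M : ℕ), 0 ≤ D ∧ ∀ (J : ℕ) (ξ : ℝ),
      ‖∏ j ∈ Finset.Icc 1 J, A j ((2 : ℂ) ^ (-(j : ℤ)) * ξ)‖ ≤ D * (1 + |ξ|) ^ M := by
  obtain ⟨M, hM⟩ := pow_unbounded_of_one_lt C (one_lt_two)
  set K : ℝ := (N + 1) * (C * (2 * Real.pi * N)) with hK
  have hK0 : 0 ≤ K := by have := Real.pi_pos; positivity
  refine ⟨2 ^ M * Real.exp K, M, by positivity, ?_⟩
  intro J ξ
  -- choose k
  obtain ⟨k, hk1, hk2⟩ : ∃ k : ℕ, |ξ| ≤ 2 ^ k ∧ (2:ℝ) ^ k ≤ 2 * (1 + |ξ|) := by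
    have hex : ∃ k : ℕ, |ξ| ≤ 2 ^ k := by
      obtain ⟨n, hn⟩ := pow_unbounded_of_one_lt |ξ| (one_lt_two)
      exact ⟨n, hn.le⟩
    classical
    refine ⟨Nat.find hex, Nat.find_spec hex, ?_⟩
    rcases Nat.eq_zero_or_pos (Nat.find hex) with h | h
    · rw [h]; have := abs_nonneg ξ; norm_num; linarith
    · have := Nat.find_min hex (m := Nat.find hex - 1) (by omega)
      push Not at this
      have e : (2:ℝ) ^ (Nat.find hex) = 2 * 2 ^ (Nat.find hex - 1) := by
        rw [← pow_succ']; congr 1; omega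
      rw [e]; linarith
  have hcast : ∀ j : ℕ, (2 : ℂ) ^ (-(j : ℤ)) * ξ = (((2:ℝ) ^ j)⁻¹ * ξ : ℝ) := by
    intro j; push_cast; simp
  have h1 : ∀ J, ‖∏ j ∈ Finset.Icc 1 J, A j ((2 : ℂ) ^ (-(j : ℤ)) * ξ)‖ ≤ (2 ^ M) ^ J := by
    intro J
    induction J with
    | zero => simp
    | succ n ih =>
      rw [Finset.prod_Icc_succ_top (by omega), norm_mul, pow_succ]
      refine mul_le_mul ih ?_ (norm_nonneg _) (by positivity)
      rw [hcast]; exact (hAbd _ _).trans hM.le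
  have h2 : ∀ n, ‖∏ j ∈ Finset.Icc 1 (k + n), A j ((2 : ℂ) ^ (-(j : ℤ)) * ξ)‖
      ≤ (2 ^ M) ^ k * Real.exp (K * (1 - (2 ^ n)⁻¹)) := by
    intro n
    induction n with
    | zero => simpa using h1 k
    | succ n ih =>
      rw [← add_assoc, Finset.prod_Icc_succ_top (by omega), norm_mul]
      have hf : ‖A (k + n + 1) ((2 : ℂ) ^ (-((k + n + 1 : ℕ) : ℤ)) * ξ)‖ ≤ Real.exp (K * (2 ^ (n+1))⁻¹) := by
        rw [hcast]
        refine (aux_lip N C hC _ _ (hA _) (hAbd _) (hA0 _) _).trans ?_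
        rw [← hK]
        have : |((2:ℝ) ^ (k + n + 1))⁻¹ * ξ| ≤ (2 ^ (n+1))⁻¹ := by
          rw [abs_mul, abs_of_pos (by positivity)]
          calc ((2:ℝ) ^ (k + n + 1))⁻¹ * |ξ| ≤ ((2:ℝ) ^ (k + n + 1))⁻¹ * 2 ^ k := by gcongr
            _ = (2 ^ (n+1))⁻¹ := by
              rw [add_assoc, pow_add]; field_simp
        calc 1 + K * |((2:ℝ) ^ (k + n + 1))⁻¹ * ξ| ≤ 1 + K * (2 ^ (n+1))⁻¹ := by gcongr
          _ ≤ _ := by rw [add_comm]; exact Real.add_one_le_exp _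
      refine (mul_le_mul ih hf (norm_nonneg _) (by positivity)).trans (le_of_eq ?_)
      rw [mul_assoc, ← Real.exp_add]
      congr 2
      rw [pow_succ]; field_simp; ring
  have h3 : ((2:ℝ) ^ M) ^ k ≤ 2 ^ M * (1 + |ξ|) ^ M := by
    rw [← pow_mul, mul_comm M k, pow_mul, ← mul_pow]
    gcongr
  have hfin : ∀ J, ‖∏ j ∈ Finset.Icc 1 J, A j ((2 : ℂ) ^ (-(j : ℤ)) * ξ)‖ ≤ (2 ^ M) ^ k * Real.exp K := by
    intro J
    rcases le_total J k with h | h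
    · calc _ ≤ ((2:ℝ) ^ M) ^ J := h1 J
        _ ≤ (2 ^ M) ^ k := by
          apply pow_le_pow_right₀ _ h
          exact one_le_pow₀ (by norm_num)
        _ ≤ _ := by
          apply le_mul_of_one_le_right (by positivity)
          exact Real.one_le_exp hK0
    · obtain ⟨n, rfl⟩ := Nat.exists_eq_add_of_le h
      refine (h2 n).trans ?_
      gcongr
      have : (0:ℝ) ≤ (2 ^ n)⁻¹ := by positivity
      nlinarith
  calc _ ≤ _ := hfin J
    _ ≤ (2 ^ M * (1 + |ξ|) ^ M) * Real.exp K := by gcongr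
    _ = _ := by ring

open scoped FourierTransform SchwartzMap ContDiff in
lemma aux_fourier_eq (f : ℝ → ℂ) (w : ℝ) : 𝓕 f w = fourierExt f w := by
  rw [Real.fourier_real_eq_integral_exp_smul, fourierExt]
  congr 1; ext x
  rw [smul_eq_mul, mul_comm]
  congr 2; push_cast; ring

open scoped FourierTransform SchwartzMap ContDiff in
/-- test function as a Fourier transform -/
lemma aux_test (H : ℝ → ℂ) (hH : ContDiff ℝ ∞ H) (hs : HasCompactSupport H) :
    ∃ g : ℝ → ℂ, Continuous g ∧ (∀ k : ℕ, Integrable (fun x => |x| ^ k * ‖g x‖)) ∧ Integrable g ∧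
      (∀ x : ℝ, fourierExt g x = H x) := by
  let S : 𝓢(ℝ, ℂ) := hs.toSchwartzMap hH
  let g : 𝓢(ℝ, ℂ) := 𝓕⁻ S
  refine ⟨g, g.continuous, fun k => by simpa using g.integrable_pow_mul volume k, g.integrable, ?_⟩
  intro x
  rw [← aux_fourier_eq, ← SchwartzMap.fourier_coe]
  simp [g, S]

open scoped FourierTransform SchwartzMap ContDiff in
lemma aux_flip (φ g : ℝ → ℂ) (hφ : Integrable φ) (hg : Integrable g) :
    ∫ ξ : ℝ, fourierExt φ ξ * g ξ = ∫ x : ℝ, φ x * fourierExt g x := by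
  have := VectorFourier.integral_fourierIntegral_smul_eq_flip (μ := volume) (ν := volume) (L := innerₗ ℝ) (e := Real.fourierChar)
    Real.continuous_fourierChar continuous_inner hφ hg
  simp only [flip_innerₗ, smul_eq_mul] at this
  simp_rw [← aux_fourier_eq]
  exact this

lemma aux_limit (P : ℕ → ℝ → ℂ) (φ : ℝ → ℂ) (hint : Integrable φ) (D : ℝ) (M : ℕ)
    (hPc : ∀ J, Continuous (P J))
    (hP : ∀ J ξ, ‖P J ξ‖ ≤ D * (1 + |ξ|) ^ M)
    (hlim : ∀ ξ : ℝ, Filter.Tendsto (fun J => P J ξ) Filter.atTop (nhds (fourierExt φ ξ)))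
    (H g : ℝ → ℂ) (hgc : Continuous g) (hgi : ∀ k : ℕ, Integrable (fun x => |x| ^ k * ‖g x‖))
    (hg : Integrable g) (hgH : ∀ x : ℝ, fourierExt g x = H x) 
    (hz : ∀ᶠ J in Filter.atTop, ∫ ξ : ℝ, P J ξ * g ξ = 0) : ∫ x : ℝ, φ x * H x = 0 := by
  simp_rw [← hgH]
  rw [← aux_flip φ g hint hg]
  have ht : Filter.Tendsto (fun J => ∫ ξ : ℝ, P J ξ * g ξ) Filter.atTop (nhds (∫ ξ : ℝ, fourierExt φ ξ * g ξ)) := by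
    refine tendsto_integral_of_dominated_convergence (fun ξ => (D * (1 + |ξ|) ^ M) * ‖g ξ‖) ?_ ?_ ?_ ?_
    · intro J
      exact ((hPc J).mul hgc).aestronglyMeasurable
    · have : (fun ξ : ℝ => (D * (1 + |ξ|) ^ M) * ‖g ξ‖) = fun ξ => ∑ m ∈ Finset.range (M + 1), (D * (M.choose m)) * (|ξ| ^ (M - m) * ‖g ξ‖) := by
        ext ξ
        rw [add_pow, Finset.mul_sum, Finset.sum_mul]
        apply Finset.sum_congr rfl
        intro m _
        simp; ring
      rw [this]
      exact integrable_finsetSum _ fun m _ => (hgi _).const_mul _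
    · intro J
      refine Filter.Eventually.of_forall fun ξ => ?_
      rw [norm_mul]
      exact mul_le_mul_of_nonneg_right (hP J ξ) (norm_nonneg _)
    · refine Filter.Eventually.of_forall fun ξ => ?_
      exact (hlim ξ).mul_const _
  refine tendsto_nhds_unique ht ?_
  refine (tendsto_const_nhds (x := (0:ℂ))).congr' ?_
  filter_upwards [hz] with J hJ using hJ.symm

lemma aux_repB (N : ℕ) (coef : ℕ → ℕ → ℂ) (A : ℕ → ℂ → ℂ)
    (hA : ∀ j : ℕ, ∀ y : ℂ, A j y =
      ∑ m ∈ Finset.range (N + 1), coef j m * Complex.exp (-(2 * (Real.pi : ℂ) * Complex.I * (m : ℂ) * y)))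
    (J : ℕ) : ∃ p : Polynomial ℂ, ∀ z : ℂ, ∏ j ∈ Finset.Icc 1 J, A j ((2 : ℂ) ^ (-(j : ℤ)) * z)
      = p.eval (Complex.exp (-(2 * (Real.pi : ℂ) * Complex.I * (((2:ℝ) ^ J)⁻¹ : ℝ) * z))) := by
  induction J with
  | zero => exact ⟨1, by simp⟩
  | succ n ih =>
    obtain ⟨p, hp⟩ := ih
    refine ⟨p.comp (Polynomial.X ^ 2) *
      ∑ m ∈ Finset.range (N + 1), Polynomial.C (coef (n+1) m) * Polynomial.X ^ m, fun z => ?_⟩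
    rw [Finset.prod_Icc_succ_top (by omega), hp, hA, Polynomial.eval_mul, Polynomial.eval_comp]
    congr 1
    · congr 1
      simp only [Polynomial.eval_pow, Polynomial.eval_X]
      rw [← Complex.exp_nat_mul]
      congr 1
      push_cast
      rw [pow_succ]; field_simp
    · simp only [Polynomial.eval_finsetSum, Polynomial.eval_mul, Polynomial.eval_C, Polynomial.eval_pow, Polynomial.eval_X]
      apply Finset.sum_congr rfl
      intro m _
      rw [← Complex.exp_nat_mul]
      congr 2
      simp only [zpow_neg, zpow_natCast]
      push_cast
      ring

lemma aux_repV (N : ℕ) (coef : ℕ → ℕ → ℂ) (A : ℕ → ℂ → ℂ)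
    (hA : ∀ j : ℕ, ∀ y : ℂ, A j y =
      ∑ m ∈ Finset.range (N + 1), coef j m * Complex.exp (-(2 * (Real.pi : ℂ) * Complex.I * (m : ℂ) * y)))
    (J n : ℕ) : ∃ (ι : Type) (_ : Fintype ι) (v : ι → ℂ) (t : ι → ℝ),
      (∀ i, 0 ≤ t i ∧ t i ≤ N * (((2:ℝ) ^ J)⁻¹ - ((2:ℝ) ^ (J + n))⁻¹)) ∧
      ∀ z : ℂ, ∏ j ∈ Finset.Icc 1 (J + n), A j ((2 : ℂ) ^ (-(j : ℤ)) * z)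
      = (∏ j ∈ Finset.Icc 1 J, A j ((2 : ℂ) ^ (-(j : ℤ)) * z)) *
        ∑ i, v i * Complex.exp (-(2 * (Real.pi : ℂ) * Complex.I * (t i : ℂ) * z)) := by
  induction n with
  | zero => exact ⟨Unit, inferInstance, fun _ => 1, fun _ => 0, by simp, by simp⟩
  | succ n ih =>
    obtain ⟨ι, _, v, t, ht, hz⟩ := ih
    refine ⟨ι × Fin (N + 1), inferInstance, fun p => v p.1 * coef (J + n + 1) p.2,
      fun p => t p.1 + (p.2 : ℕ) * ((2:ℝ) ^ (J + n + 1))⁻¹, ?_, ?_⟩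
    · rintro ⟨i, m⟩
      obtain ⟨h1, h2⟩ := ht i
      refine ⟨by positivity, ?_⟩
      have hm : ((m : ℕ) : ℝ) ≤ N := by exact_mod_cast Nat.lt_succ_iff.1 m.2
      have e : ((2:ℝ) ^ (J + n))⁻¹ = 2 * ((2:ℝ) ^ (J + n + 1))⁻¹ := by
        rw [pow_succ]; field_simp
      have h3 : ((m : ℕ) : ℝ) * ((2:ℝ) ^ (J + n + 1))⁻¹ ≤ N * ((2:ℝ) ^ (J + n + 1))⁻¹ := by gcongr
      rw [e] at h2
      rw [← add_assoc]
      simp only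
      linarith
    · intro z
      rw [← add_assoc, Finset.prod_Icc_succ_top (by omega), hz, mul_assoc]
      congr 1
      rw [hA, Finset.sum_range, Finset.sum_mul_sum, Fintype.sum_prod_type]
      apply Finset.sum_congr rfl
      intro i _
      apply Finset.sum_congr rfl
      intro m _
      rw [mul_mul_mul_comm, ← Complex.exp_add]
      congr 2
      simp only [zpow_neg, zpow_natCast]
      push_cast
      ring

lemma aux_intF {ι : Type} [Fintype ι] (R : ℕ) (b : ℕ → ℂ) (h : ℝ) (v : ι → ℂ) (t : ι → ℝ)
    (F g H : ℝ → ℂ) (hgc : Continuous g)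
    (hg : Integrable g) (hgH : ∀ x : ℝ, fourierExt g x = H x)
    (hF : ∀ ξ : ℝ, F ξ = (∑ m ∈ Finset.range R, b m * Complex.exp (-(2 * (Real.pi : ℂ) * Complex.I * ((m * h : ℝ) : ℂ) * ξ))) *
      ∑ i, v i * Complex.exp (-(2 * (Real.pi : ℂ) * Complex.I * (t i : ℂ) * ξ))) :
    ∫ ξ, F ξ * g ξ = ∑ i, v i * ∑ m ∈ Finset.range R, b m * H (m * h + t i) := by
  have key : ∀ ξ, F ξ * g ξ = ∑ i, ∑ m ∈ Finset.range R, (v i * b m) * (g ξ * Complex.exp (-(2 * (Real.pi : ℂ) * Complex.I * (ξ : ℂ) * ((m * h + t i : ℝ) : ℂ)))) := by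
    intro ξ
    rw [hF, Finset.sum_mul_sum, Finset.sum_comm, Finset.sum_mul]
    apply Finset.sum_congr rfl
    intro i _
    rw [Finset.sum_mul]
    apply Finset.sum_congr rfl
    intro m _
    rw [mul_mul_mul_comm, ← Complex.exp_add]
    have : -(2 * (Real.pi : ℂ) * Complex.I * ((m * h : ℝ) : ℂ) * ξ) + -(2 * (Real.pi : ℂ) * Complex.I * (t i : ℂ) * ξ) = -(2 * (Real.pi : ℂ) * Complex.I * (ξ : ℂ) * ((m * h + t i : ℝ) : ℂ)) := by
      push_cast; ring
    rw [this]; ring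
  simp_rw [key]
  have hi : ∀ s : ℝ, Integrable (fun ξ : ℝ => g ξ * Complex.exp (-(2 * (Real.pi : ℂ) * Complex.I * (ξ : ℂ) * (s : ℂ)))) := by
    intro s
    refine hg.mono (by apply Continuous.aestronglyMeasurable; fun_prop) ?_
    refine Filter.Eventually.of_forall fun ξ => ?_
    rw [norm_mul, Complex.norm_exp]; simp
  rw [integral_finsetSum _ (fun i _ => integrable_finsetSum _ fun m _ => (hi _).const_mul _)]
  apply Finset.sum_congr rfl
  intro i _
  rw [integral_finsetSum _ (fun m _ => (hi _).const_mul _), Finset.mul_sum]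
  apply Finset.sum_congr rfl
  intro m _
  rw [integral_const_mul, ← hgH, mul_assoc]
  rfl

lemma aux_Hzero (N R M : ℕ) (hM : R + N ≤ M) (h : ℝ) (hh : 0 < h) (b : ℕ → ℂ) (s : Finset ℤ) (c w : ℤ → ℂ)
    (hw : ∀ i, w i ≠ 0)
    (hrel : ∀ k < N, ∑ i ∈ s, c i * (∑ m ∈ Finset.range R, b m * w i ^ m) * w i ^ k = 0)
    (η : ℝ → ℂ) (hη : ∀ x, x ∉ Set.Ioo 0 h → η x = 0) (t : ℝ) (ht : 0 ≤ t) (ht' : t ≤ N * h) :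
    ∑ m ∈ Finset.range R, b m * ∑ i ∈ s, c i * ∑ n ∈ Finset.Icc (-(M:ℤ)) M, w i ^ n * η (m * h + t - n * h) = 0 := by
  have key : ∀ i, ∀ m ∈ Finset.range R, ∑ n ∈ Finset.Icc (-(M:ℤ)) M, w i ^ n * η (m * h + t - n * h)
      = ∑ k ∈ Finset.range N, w i ^ m * w i ^ k * η (t - k * h) := by
    intro i m hm
    rw [Finset.mem_range] at hm
    symm
    refine Finset.sum_of_injOn (fun k : ℕ => ((m + k : ℕ) : ℤ)) ?_ ?_ ?_ ?_
    · intro a _ b _ hab; (try simp only at hab); omega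
    · intro k hk
      simp only [Finset.coe_range, Set.mem_Iio] at hk
      simp only [Finset.coe_Icc, Set.mem_Icc]; omega
    · intro n _ hn
      rw [hη, mul_zero]
      intro hmem
      apply hn
      obtain ⟨h1, h2⟩ := hmem
      have h3 : ((n - m : ℤ) : ℝ) * h < N * h := by push_cast; linarith
      have h4 : (-1 : ℝ) * h < ((n - m : ℤ) : ℝ) * h := by push_cast; linarith
      have h3' := lt_of_mul_lt_mul_right h3 hh.le
      have h4' := lt_of_mul_lt_mul_right h4 hh.le
      have h5 : n - m < N := by exact_mod_cast h3'
      have h6 : -1 < n - m := by exact_mod_cast h4'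
      refine ⟨(n - m).toNat, ?_, ?_⟩
      · simp only [Finset.coe_range, Set.mem_Iio]; omega
      · simp only; omega
    · intro k _
      rw [zpow_natCast, pow_add]
      congr 2
      push_cast; ring
  have : ∑ m ∈ Finset.range R, b m * ∑ i ∈ s, c i * ∑ n ∈ Finset.Icc (-(M:ℤ)) M, w i ^ n * η (m * h + t - n * h)
    = ∑ k ∈ Finset.range N, (∑ i ∈ s, c i * (∑ m ∈ Finset.range R, b m * w i ^ m) * w i ^ k) * η (t - k * h) := by
    calc _ = ∑ m ∈ Finset.range R, ∑ i ∈ s, ∑ k ∈ Finset.range N, c i * (b m * w i ^ m) * w i ^ k * η (t - k * h) := by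
          apply Finset.sum_congr rfl
          intro m hm
          rw [Finset.mul_sum]
          apply Finset.sum_congr rfl
          intro i _
          rw [key i m hm, Finset.mul_sum, Finset.mul_sum]
          apply Finset.sum_congr rfl
          intro k _
          ring
      _ = ∑ i ∈ s, ∑ k ∈ Finset.range N, ∑ m ∈ Finset.range R, c i * (b m * w i ^ m) * w i ^ k * η (t - k * h) := by
          rw [Finset.sum_comm]
          apply Finset.sum_congr rfl
          intro i _
          rw [Finset.sum_comm]
      _ = _ := by
          rw [Finset.sum_comm]
          apply Finset.sum_congr rfl
          intro k _
          rw [Finset.sum_mul]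
          apply Finset.sum_congr rfl
          intro i _
          rw [Finset.mul_sum, Finset.sum_mul, Finset.sum_mul]
  rw [this]
  apply Finset.sum_eq_zero
  intro k hk
  rw [hrel k (Finset.mem_range.1 hk), zero_mul]

lemma aux_summable (r : ℝ) (h0 : 0 ≤ r) (h1 : r < 1) : Summable (fun n : ℤ => r ^ n.natAbs) := by
  apply Summable.of_nat_of_neg
  · simpa using summable_geometric_of_lt_one h0 h1
  · simpa using summable_geometric_of_lt_one h0 h1

lemma aux_uniq (d : ℤ → ℂ) (D q : ℝ) (hq : q ∈ Set.Ioo (0:ℝ) 1)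
    (hd : ∀ n, ‖d n‖ ≤ D * q ^ n.natAbs) (h : ℝ) (hh : 0 < h)
    (hz : ∀ x ∈ Set.Ioo 0 h, ∑' n : ℤ, d n * Complex.exp (2 * (Real.pi : ℂ) * Complex.I * (n : ℂ) * ((x:ℝ) : ℂ)) = 0)
    (m : ℤ) : d m = 0 := by
  obtain ⟨hq0, hq1⟩ := hq
  have hD : 0 ≤ D := by have := (norm_nonneg _).trans (hd 0); simpa using this
  -- strip
  obtain ⟨r, hr1, hr2⟩ := exists_between hq1
  have hr0 : 0 < r := hq0.trans hr1
  set δ : ℝ := Real.log (r / q) / (2 * Real.pi) with hδ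
  have hδ0 : 0 < δ := by
    apply div_pos (Real.log_pos _) (by positivity)
    rw [one_lt_div hq0]; exact hr1
  have hexp : Real.exp (2 * Real.pi * δ) = r / q := by
    rw [hδ, mul_div_cancel₀ _ (by positivity), Real.exp_log (by positivity)]
  set U : Set ℂ := {z : ℂ | |z.im| < δ} with hU
  have hUo : IsOpen U := isOpen_lt (by fun_prop) (by fun_prop)
  have hUc : Convex ℝ U := by
    have : U = Complex.imLm ⁻¹' (Set.Ioo (-δ) δ) := by
      ext z; simp [hU, abs_lt]
    rw [this]
    exact (convex_Ioo _ _).linear_preimage Complex.imLm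
  have hsum : Summable (fun n : ℤ => D * r ^ n.natAbs) := (aux_summable r hr0.le hr2).mul_left D
  have hbd : ∀ (n : ℤ) (z : ℂ), z ∈ U →
      ‖d n * Complex.exp (2 * (Real.pi : ℂ) * Complex.I * (n : ℂ) * z)‖ ≤ D * r ^ n.natAbs := by
    intro n z hzU
    rw [norm_mul, Complex.norm_exp]
    have e : (2 * (Real.pi : ℂ) * Complex.I * (n : ℂ) * z).re = -(2 * Real.pi * n * z.im) := by
      simp
    rw [e]
    have h1 : -(2 * Real.pi * n * z.im) ≤ n.natAbs * (2 * Real.pi * δ) := by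
      have h2 : |(n:ℝ) * z.im| ≤ n.natAbs * δ := by
        rw [abs_mul, Nat.cast_natAbs, Int.cast_abs]
        exact mul_le_mul_of_nonneg_left (le_of_lt hzU) (abs_nonneg _)
      have h3 := (abs_le.1 h2).1
      have := Real.pi_pos
      nlinarith
    calc _ ≤ (D * q ^ n.natAbs) * Real.exp (n.natAbs * (2 * Real.pi * δ)) := by
          gcongr
          exact hd n
      _ = D * r ^ n.natAbs := by
          rw [Real.exp_nat_mul, hexp, mul_assoc, ← mul_pow, mul_div_cancel₀ _ hq0.ne']
  set Φ : ℂ → ℂ := fun z => ∑' n : ℤ, d n * Complex.exp (2 * (Real.pi : ℂ) * Complex.I * (n : ℂ) * z) with hΦ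
  have hΦd : DifferentiableOn ℂ Φ U :=
    Complex.differentiableOn_tsum_of_summable_norm hsum (fun n => by fun_prop) hUo hbd
  have hΦa : AnalyticOnNhd ℂ Φ U := hΦd.analyticOnNhd hUo
  have hreal : ∀ x : ℝ, (x : ℂ) ∈ U := fun x => by simpa [hU] using hδ0
  have hfreq : ∃ᶠ z in nhdsWithin ((h/2 : ℝ) : ℂ) {((h/2 : ℝ) : ℂ)}ᶜ, Φ z = 0 := by
    have ht : Filter.Tendsto (fun x : ℝ => (x : ℂ)) (nhdsWithin (h/2) {h/2}ᶜ) (nhdsWithin ((h/2 : ℝ) : ℂ) {((h/2 : ℝ) : ℂ)}ᶜ) := by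
      apply tendsto_nhdsWithin_of_tendsto_nhds_of_eventually_within
      · exact (Complex.continuous_ofReal.tendsto _).mono_left nhdsWithin_le_nhds
      · filter_upwards [self_mem_nhdsWithin] with x hx
        simp only [Set.mem_compl_iff, Set.mem_singleton_iff] at hx ⊢
        exact_mod_cast hx
    refine ht.frequently ?_
    apply Filter.Eventually.frequently
    have : Set.Ioo 0 h ∈ nhds (h/2) := Ioo_mem_nhds (by linarith) (by linarith)
    filter_upwards [nhdsWithin_le_nhds this] with x hx using hz x hx
  have hzero := hΦa.eqOn_zero_of_preconnected_of_frequently_eq_zero hUc.isPreconnected (hreal (h/2)) hfreq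
  -- Fourier coefficients
  let f : ℤ → C(ℝ, ℂ) := fun n => ⟨fun x => d n * Complex.exp (2 * (Real.pi : ℂ) * Complex.I * (n : ℂ) * (x:ℂ)) * Complex.exp (2 * (Real.pi : ℂ) * Complex.I * ((-m : ℤ) : ℂ) * (x:ℂ)), by fun_prop⟩
  have hs := intervalIntegral.hasSum_intervalIntegral_of_summable_norm (a := 0) (b := 1) (f := f) (by
    refine Summable.of_nonneg_of_le (fun _ => norm_nonneg _) ?_ hsum
    intro n
    rw [ContinuousMap.norm_le _ (by positivity)]
    intro x
    simp only [f, ContinuousMap.restrict_apply, ContinuousMap.coe_mk]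
    rw [norm_mul]
    have : ‖Complex.exp (2 * (Real.pi : ℂ) * Complex.I * ((-m : ℤ) : ℂ) * ((x:ℝ):ℂ))‖ = 1 := by
      rw [Complex.norm_exp]; simp
    rw [this, mul_one]
    exact hbd n _ (hreal _))
  have h1 : ∀ x : ℝ, ∑' n, f n x = 0 := by
    intro x
    simp only [f, ContinuousMap.coe_mk]
    rw [tsum_mul_right]
    have := hzero (hreal x)
    simp only [hΦ, Pi.zero_apply] at this
    rw [this, zero_mul]
  have h2 : ∀ n, ∫ x in (0:ℝ)..1, f n x = if n = m then d n else 0 := by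
    intro n
    simp only [f, ContinuousMap.coe_mk]
    have : ∀ x : ℝ, d n * Complex.exp (2 * (Real.pi : ℂ) * Complex.I * (n : ℂ) * (x:ℂ)) * Complex.exp (2 * (Real.pi : ℂ) * Complex.I * ((-m : ℤ) : ℂ) * (x:ℂ)) = d n * Complex.exp (2 * (Real.pi : ℂ) * Complex.I * ((n - m : ℤ) : ℂ) * (x:ℂ)) := by
      intro x
      rw [mul_assoc, ← Complex.exp_add]
      congr 2; push_cast; ring
    simp_rw [this]
    rw [intervalIntegral.integral_const_mul, aux_int_exp]
    simp [sub_eq_zero]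
  simp_rw [h1, h2] at hs
  have hs2 := hasSum_ite_eq m (d m)
  have e : (fun n => if n = m then d n else 0) = (fun n => if n = m then d m else 0) := by
    ext n; split_ifs with hnm
    · rw [hnm]
    · rfl
  rw [e] at hs
  have := hs2.unique hs
  simpa using this

open scoped FourierTransform in
lemma aux_poisson (φ : ℝ → ℂ) (hcont : Continuous φ) (hsupp : HasCompactSupport φ) (β : ℂ) (L : ℝ) (hL : 0 < L)
    (hs : Summable (fun k : ℤ => fourierExt φ (β + L * k))) (x : ℝ) :
    ∑' n : ℤ, φ (x + n * L⁻¹) * Complex.exp (-(2 * (Real.pi : ℂ) * Complex.I * β * ((x + n * L⁻¹ : ℝ) : ℂ)))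
      = L * ∑' k : ℤ, fourierExt φ (β + L * k) * Complex.exp (2 * (Real.pi : ℂ) * Complex.I * (k : ℂ) * ((L * x : ℝ) : ℂ)) := by
  set f : ℝ → ℂ := fun u => φ (u * L⁻¹) * Complex.exp (-(2 * (Real.pi : ℂ) * Complex.I * β * ((u * L⁻¹ : ℝ) : ℂ))) with hf
  have hfc : Continuous f := by fun_prop
  have hfs : HasCompactSupport f := by
    apply HasCompactSupport.mul_right
    exact hsupp.comp_homeomorph (Homeomorph.mulRight₀ L⁻¹ (by positivity))
  have hFf : ∀ n : ℤ, 𝓕 f n = L * fourierExt φ (β + L * n) := by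
    intro n
    rw [aux_fourier_eq, fourierExt, fourierExt]
    have := Measure.integral_comp_mul_right (fun y : ℝ => φ y * Complex.exp (-(2 * (Real.pi : ℂ) * Complex.I * (y : ℂ) * (β + L * n)))) L⁻¹
    rw [inv_inv, abs_of_pos hL, Complex.real_smul] at this
    rw [← this]
    congr 1; ext u
    simp only [hf]
    rw [mul_assoc, ← Complex.exp_add]
    congr 2
    have : (L:ℂ) ≠ 0 := by exact_mod_cast hL.ne'
    push_cast; field_simp; ring
  have hO : f =O[Filter.cocompact ℝ] fun x : ℝ => |x| ^ (-(2:ℝ)) := by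
    have : f =ᶠ[Filter.cocompact ℝ] 0 := by
      rw [hasCompactSupport_iff_eventuallyEq] at hfs
      rwa [Filter.coclosedCompact_eq_cocompact] at hfs
    exact this.trans_isBigO (Asymptotics.isBigO_zero _ _)
  have hP := Real.tsum_eq_tsum_fourier_of_rpow_decay_of_summable hfc one_lt_two hO
    (by simp_rw [hFf]; exact hs.mul_left _) (x * L)
  simp_rw [hFf] at hP
  rw [← tsum_mul_left]
  convert hP using 1
  · congr 1; ext n
    simp only [hf]
    have : (x * L + n) * L⁻¹ = x + n * L⁻¹ := by field_simp
    rw [this]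
  · congr 1; ext k
    rw [fourier_coe_apply, ← mul_assoc]
    congr 2
    push_cast; ring

open scoped ContDiff in
lemma aux_Gzero (φ : ℝ → ℂ) (hcont : Continuous φ) (hint : Integrable φ) (s : Finset ℤ) (c w : ℤ → ℂ)
    (M : ℕ) (h : ℝ)
    (hkey : ∀ η : ℝ → ℂ, ContDiff ℝ ∞ η → HasCompactSupport η → (∀ x, x ∉ Set.Ioo 0 h → η x = 0) →
      ∫ y, φ y * (∑ i ∈ s, c i * ∑ n ∈ Finset.Icc (-(M:ℤ)) M, w i ^ n * η (y - n * h)) = 0) :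
    ∀ x ∈ Set.Ioo 0 h, ∑ i ∈ s, c i * ∑ n ∈ Finset.Icc (-(M:ℤ)) M, w i ^ n * φ (x + n * h) = 0 := by
  set G : ℝ → ℂ := fun x => ∑ i ∈ s, c i * ∑ n ∈ Finset.Icc (-(M:ℤ)) M, w i ^ n * φ (x + n * h) with hG
  have hGc : Continuous G := by fun_prop
  have hae : ∀ᵐ x : ℝ, x ∈ Set.Ioo 0 h → G x = 0 := by
    apply isOpen_Ioo.ae_eq_zero_of_integral_contDiff_smul_eq_zero
    · exact hGc.locallyIntegrable.locallyIntegrableOn _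
    intro η0 hη hηs hηU
    set η : ℝ → ℂ := fun x => (η0 x : ℂ) with hηdef
    have h1 : ContDiff ℝ ∞ η := Complex.ofRealCLM.contDiff.comp hη
    have h2 : HasCompactSupport η := hηs.comp_left (g := fun x : ℝ => (x:ℂ)) (by simp)
    have h3 : ∀ x, x ∉ Set.Ioo 0 h → η x = 0 := by
      intro x hx
      have : η0 x = 0 := image_eq_zero_of_notMem_tsupport fun hm => hx (hηU hm)
      simp [hηdef, this]
    rw [← hkey η h1 h2 h3]
    have hηc : Continuous η := h1.continuous
    have hi : ∀ n : ℤ, Integrable (fun y => φ y * η (y - n * h)) := by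
      intro n
      apply Continuous.integrable_of_hasCompactSupport (by fun_prop)
      apply HasCompactSupport.mul_left
      exact h2.comp_homeomorph (Homeomorph.subRight ((n:ℝ) * h))
    have hi2 : ∀ n : ℤ, Integrable (fun y => φ (y + n * h) * η y) := by
      intro n
      apply Continuous.integrable_of_hasCompactSupport (by fun_prop)
      exact HasCompactSupport.mul_left h2
    have hsh : ∀ n : ℤ, ∫ y, φ y * η (y - n * h) = ∫ y, φ (y + n * h) * η y := by
      intro n
      rw [← integral_add_right_eq_self (fun y => φ y * η (y - n * h)) ((n:ℝ) * h)]
      simp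
    have e1 : ∀ x, η0 x • G x = ∑ i ∈ s, ∑ n ∈ Finset.Icc (-(M:ℤ)) M, (c i * w i ^ n) * (φ (x + n * h) * η x) := by
      intro x
      rw [Complex.real_smul, hG, Finset.mul_sum]
      apply Finset.sum_congr rfl
      intro i _
      rw [Finset.mul_sum, Finset.mul_sum]
      apply Finset.sum_congr rfl
      intro n _
      simp only [hηdef]; ring
    have e2 : ∀ x, φ x * (∑ i ∈ s, c i * ∑ n ∈ Finset.Icc (-(M:ℤ)) M, w i ^ n * η (x - n * h)) = ∑ i ∈ s, ∑ n ∈ Finset.Icc (-(M:ℤ)) M, (c i * w i ^ n) * (φ x * η (x - n * h)) := by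
      intro x
      rw [Finset.mul_sum]
      apply Finset.sum_congr rfl
      intro i _
      rw [Finset.mul_sum, Finset.mul_sum]
      apply Finset.sum_congr rfl
      intro n _
      ring
    simp_rw [e1, e2]
    rw [integral_finsetSum _ (fun i _ => integrable_finsetSum _ fun n _ => (hi2 _).const_mul _),
      integral_finsetSum _ (fun i _ => integrable_finsetSum _ fun n _ => (hi _).const_mul _)]
    apply Finset.sum_congr rfl
    intro i _
    rw [integral_finsetSum _ (fun n _ => (hi2 _).const_mul _), integral_finsetSum _ (fun n _ => (hi _).const_mul _)]
    apply Finset.sum_congr rfl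
    intro n _
    rw [integral_const_mul, integral_const_mul, hsh]
  have hE : Set.EqOn G 0 (Set.Ioo 0 h) := by
    refine Measure.eqOn_open_of_ae_eq (μ := volume) ?_ isOpen_Ioo hGc.continuousOn continuousOn_const
    rw [Filter.EventuallyEq, ae_restrict_iff' measurableSet_Ioo]
    exact hae
  exact hE

lemma aux_linalg (N : ℕ) (s : Finset ℤ) (hs : s.card = N + 1) (B w : ℤ → ℂ) :
    ∃ c : ℤ → ℂ, (∃ i ∈ s, c i ≠ 0) ∧ ∀ k < N, ∑ i ∈ s, c i * B i * w i ^ k = 0 := by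
  classical
  let Mx : Matrix (Fin N) s ℂ := fun k i => B i * w i ^ (k : ℕ)
  have hk : LinearMap.ker (Matrix.mulVecLin Mx) ≠ ⊥ := by
    apply LinearMap.ker_ne_bot_of_finrank_lt
    simp [hs]
  obtain ⟨v, hv, hv0⟩ := Submodule.exists_mem_ne_zero_of_ne_bot hk
  refine ⟨fun i => if hi : i ∈ s then v ⟨i, hi⟩ else 0, ?_, ?_⟩
  · obtain ⟨i, hi⟩ := Function.ne_iff.1 hv0
    refine ⟨i, i.2, ?_⟩
    simpa using hi
  · intro k hk
    have := congrFun (LinearMap.mem_ker.1 hv) ⟨k, hk⟩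
    simp only [Matrix.mulVecLin_apply, Matrix.mulVec, dotProduct, Mx, Pi.zero_apply] at this
    rw [← this, ← Finset.sum_coe_sort s]
    apply Finset.sum_congr rfl
    intro i _
    simp; ring

lemma aux_sep (s : Finset ℤ) : ∃ J : ℕ, ∀ i ∈ s, ∀ i' ∈ s, ((2:ℤ) ^ J) ∣ i - i' → i = i' := by
  refine ⟨2 * ∑ i ∈ s, i.natAbs, ?_⟩
  intro i hi i' hi' hd
  have h1 : i.natAbs ≤ ∑ i ∈ s, i.natAbs := Finset.single_le_sum (f := fun i : ℤ => i.natAbs) (fun _ _ => Nat.zero_le _) hi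
  have h2 : i'.natAbs ≤ ∑ i ∈ s, i.natAbs := Finset.single_le_sum (f := fun i : ℤ => i.natAbs) (fun _ _ => Nat.zero_le _) hi'
  have h3 : 2 * ∑ i ∈ s, i.natAbs < 2 ^ (2 * ∑ i ∈ s, i.natAbs) := Nat.lt_two_pow_self
  have h4 : ((2 * ∑ i ∈ s, i.natAbs : ℕ) : ℤ) < 2 ^ (2 * ∑ i ∈ s, i.natAbs) := by exact_mod_cast h3
  have : i - i' = 0 := by
    apply Int.eq_zero_of_abs_lt_dvd hd
    refine lt_of_le_of_lt ?_ h4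
    rw [abs_le]
    constructor <;> omega
  omega

lemma aux_series (φ : ℝ → ℂ) (hcont : Continuous φ) (hsupp : HasCompactSupport φ)
    (α : ℂ) (C' : ℝ) (q : ℝ) (hq : q ∈ Set.Ioo (0 : ℝ) 1)
    (hdecay : ∀ ℓ : ℤ, ‖fourierExt φ (α + (ℓ : ℂ))‖ ≤ C' * q ^ ℓ.natAbs) (J : ℕ) (i : ℤ) (x : ℝ)
    (M : ℕ) (hM : ∀ n : ℤ, n ∉ Finset.Icc (-(M:ℤ)) M → φ (x + n * ((2:ℝ) ^ J)⁻¹) = 0) :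
    HasSum (fun l : ℤ => (if (2:ℤ) ^ J ∣ l - i then fourierExt φ (α + l) else 0) *
        Complex.exp (2 * (Real.pi : ℂ) * Complex.I * (l : ℂ) * (x : ℂ)))
      ((((2:ℝ) ^ J : ℝ) : ℂ)⁻¹ * Complex.exp (-(2 * (Real.pi : ℂ) * Complex.I * α * x)) *
        ∑ n ∈ Finset.Icc (-(M:ℤ)) M,
          Complex.exp (-(2 * (Real.pi : ℂ) * Complex.I * ((((2:ℝ) ^ J)⁻¹ : ℝ) : ℂ) * (α + i))) ^ n * φ (x + n * ((2:ℝ) ^ J)⁻¹)) := by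
  set L : ℝ := 2 ^ J with hL
  have hL0 : 0 < L := by positivity
  have hLc : (L : ℂ) ≠ 0 := by exact_mod_cast hL0.ne'
  let e : ℤ → ℤ := fun k => i + 2 ^ J * k
  have he : Function.Injective e := by
    intro a b hab
    simp only [e, add_right_inj] at hab
    exact mul_left_cancel₀ (by positivity) hab
  have hecast : ∀ k : ℤ, α + ((e k : ℤ) : ℂ) = α + i + L * k := by
    intro k; simp only [e, hL]; push_cast; ring
  have hsum0 : Summable (fun l : ℤ => ‖fourierExt φ (α + (l : ℂ))‖) :=
    Summable.of_nonneg_of_le (fun _ => norm_nonneg _) hdecay ((aux_summable q hq.1.le hq.2).mul_left C')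
  have hsum1 : Summable (fun k : ℤ => ‖fourierExt φ (α + i + L * k)‖) := by
    have := hsum0.comp_injective he
    refine this.congr fun k => ?_
    simp only [Function.comp, hecast]
  have hP := aux_poisson φ hcont hsupp (α + i) L hL0 hsum1.of_norm x
  rw [← he.hasSum_iff]
  · have hterm : ((fun l : ℤ => (if (2:ℤ) ^ J ∣ l - i then fourierExt φ (α + l) else 0) *
        Complex.exp (2 * (Real.pi : ℂ) * Complex.I * (l : ℂ) * (x : ℂ))) ∘ e)
        = fun k : ℤ => Complex.exp (2 * (Real.pi : ℂ) * Complex.I * (i : ℂ) * (x : ℂ)) * (fourierExt φ (α + i + L * k) * Complex.exp (2 * (Real.pi : ℂ) * Complex.I * (k : ℂ) * ((L * x : ℝ) : ℂ))) := by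
      ext k
      have hd : (2:ℤ) ^ J ∣ e k - i := ⟨k, by simp [e]⟩
      simp only [Function.comp, hd, if_true, hecast]
      rw [mul_left_comm, ← Complex.exp_add]
      congr 2
      simp only [e, hL]; push_cast; ring
    rw [hterm]
    have hsm : Summable (fun k : ℤ => fourierExt φ (α + i + L * k) * Complex.exp (2 * (Real.pi : ℂ) * Complex.I * (k : ℂ) * ((L * x : ℝ) : ℂ))) := by
      apply Summable.of_norm
      refine hsum1.congr fun k => ?_
      rw [norm_mul, Complex.norm_exp]; simp
    have hh := hsm.hasSum.mul_left (Complex.exp (2 * (Real.pi : ℂ) * Complex.I * (i : ℂ) * (x : ℂ)))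
    refine Eq.subst (motive := fun a => HasSum _ a) ?_ hh
    symm
    have hS : ∑' k : ℤ, fourierExt φ (α + i + L * k) * Complex.exp (2 * (Real.pi : ℂ) * Complex.I * (k : ℂ) * ((L * x : ℝ) : ℂ)) = (L:ℂ)⁻¹ * ∑' n : ℤ, φ (x + n * L⁻¹) * Complex.exp (-(2 * (Real.pi : ℂ) * Complex.I * (α + i) * ((x + n * L⁻¹ : ℝ) : ℂ))) := by
      rw [hP, inv_mul_cancel_left₀ hLc]
    rw [hS, tsum_eq_sum (s := Finset.Icc (-(M:ℤ)) M) (fun n hn => by rw [hM n hn, zero_mul])]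
    rw [mul_left_comm, mul_assoc]
    congr 1
    rw [Finset.mul_sum, Finset.mul_sum]
    apply Finset.sum_congr rfl
    intro n _
    rw [← Complex.exp_int_mul, mul_comm (φ _), ← mul_assoc, ← mul_assoc, ← Complex.exp_add, ← Complex.exp_add]
    congr 2
    push_cast; ring
  · intro l hl
    rw [if_neg, zero_mul]
    rintro ⟨k, hk⟩
    exact hl ⟨k, by simp only [e]; linarith⟩

lemma aux_cs_sum {κ : Type} (s : Finset κ) (f : κ → ℝ → ℂ) (hf : ∀ i, HasCompactSupport (f i)) :
    HasCompactSupport (fun y => ∑ i ∈ s, f i y) := by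
  classical
  induction s using Finset.induction_on with
  | empty =>
    simp only [Finset.sum_empty]
    exact (HasCompactSupport.zero : HasCompactSupport (0 : ℝ → ℂ))
  | insert a s ha ih =>
    simp_rw [Finset.sum_insert ha]
    exact (hf a).add ih

lemma aux_Hs (s : Finset ℤ) (c w : ℤ → ℂ) (M : ℕ) (h : ℝ) (η : ℝ → ℂ) (hηs : HasCompactSupport η) :
    HasCompactSupport (fun y => ∑ i ∈ s, c i * ∑ n ∈ Finset.Icc (-(M:ℤ)) M, w i ^ n * η (y - n * h)) := by
  have h1 : ∀ n : ℤ, HasCompactSupport (fun y => η (y - n * h)) := fun n =>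
    hηs.comp_homeomorph (Homeomorph.subRight ((n:ℝ) * h))
  refine aux_cs_sum s (fun i y => c i * ∑ n ∈ Finset.Icc (-(M:ℤ)) M, w i ^ n * η (y - n * h)) fun i => ?_
  refine HasCompactSupport.mul_left (f := fun _ => c i) ?_
  refine aux_cs_sum _ (fun (n : ℤ) y => w i ^ n * η (y - n * h)) fun n => ?_
  exact HasCompactSupport.mul_left (f := fun _ => w i ^ n) (h1 n)


/-- Let `a_j` be trigonometric polynomials of degree ≤ N with `a_j(0) = 1` and
`sup_ℝ |a_j| ≤ C`, and let `φ̂(z) = Π_{j=1}^∞ a_j(2^{−j}z)`. If the sequence `ℓ ↦ φ̂(α+ℓ)`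
decays exponentially, then `{ℓ ∈ ℤ : φ̂(α+ℓ) ≠ 0}` has at most `N` elements. -/
theorem stmt_15 (N : ℕ) (C : ℝ) (hC : 0 < C)
    (coef : ℕ → ℕ → ℂ) (A : ℕ → ℂ → ℂ)
    (hA : ∀ j : ℕ, ∀ y : ℂ, A j y =
      ∑ m ∈ Finset.range (N + 1), coef j m * Complex.exp (-(2 * (Real.pi : ℂ) * Complex.I * (m : ℂ) * y)))
    (hA0 : ∀ j : ℕ, A j 0 = 1)
    (hAbd : ∀ j : ℕ, ∀ y : ℝ, ‖A j ((y : ℂ))‖ ≤ C)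
    (φ : ℝ → ℂ) (hcont : Continuous φ) (hint : Integrable φ) (hsupp : HasCompactSupport φ)
    (hprod : ∀ z : ℂ, Filter.Tendsto
      (fun J : ℕ => ∏ j ∈ Finset.Icc 1 J, A j ((2 : ℂ) ^ (-(j : ℤ)) * z))
      Filter.atTop (nhds (fourierExt φ z)))
    (α : ℂ) (C' : ℝ) (hC' : 0 < C') (q : ℝ) (hq : q ∈ Set.Ioo (0 : ℝ) 1)
    (hdecay : ∀ ℓ : ℤ, ‖fourierExt φ (α + (ℓ : ℂ))‖ ≤ C' * q ^ ℓ.natAbs) :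
    ({ℓ : ℤ | fourierExt φ (α + (ℓ : ℂ)) ≠ 0}).Finite ∧
      ({ℓ : ℤ | fourierExt φ (α + (ℓ : ℂ)) ≠ 0}).ncard ≤ N := by
  by_contra hcon
  obtain ⟨s, hsub, hcard⟩ : ∃ s : Finset ℤ, (∀ l ∈ s, fourierExt φ (α + (l : ℂ)) ≠ 0) ∧ s.card = N + 1 := by
    by_cases hf : ({ℓ : ℤ | fourierExt φ (α + (ℓ : ℂ)) ≠ 0}).Finite
    · have hlt : N + 1 ≤ ({ℓ : ℤ | fourierExt φ (α + (ℓ : ℂ)) ≠ 0}).ncard := by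
        by_contra hlt
        exact hcon ⟨hf, by omega⟩
      rw [Set.ncard_eq_toFinset_card _ hf] at hlt
      obtain ⟨s, hs, hc⟩ := Finset.exists_subset_card_eq hlt
      exact ⟨s, fun l hl => by simpa using hs hl, hc⟩
    · obtain ⟨s, hs, hc⟩ := Set.Infinite.exists_subset_card_eq hf (N + 1)
      exact ⟨s, fun l hl => hs hl, hc⟩
  obtain ⟨J, hJ⟩ := aux_sep s
  obtain ⟨p, hp⟩ := aux_repB N coef A hA J
  set h : ℝ := ((2:ℝ) ^ J)⁻¹ with hh
  have hh0 : 0 < h := by positivity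
  set w : ℤ → ℂ := fun i => Complex.exp (-(2 * (Real.pi : ℂ) * Complex.I * (h : ℂ) * (α + i))) with hw
  obtain ⟨c, ⟨i0, hi0, hci0⟩, hrel⟩ := aux_linalg N s hcard
    (fun i => ∑ m ∈ Finset.range (p.natDegree + 1), p.coeff m * w i ^ m) w
  obtain ⟨D, Mb, hD, hbd⟩ := aux_prod N C hC coef A hA hA0 hAbd
  -- support of φ
  obtain ⟨R0, hR0⟩ : ∃ R0 : ℝ, ∀ y, R0 < |y| → φ y = 0 := by
    obtain ⟨R0, hR⟩ := hsupp.isCompact.isBounded.subset_closedBall 0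
    refine ⟨R0, fun y hy => image_eq_zero_of_notMem_tsupport fun hm => ?_⟩
    have := hR hm
    simp at this
    linarith
  obtain ⟨M0, hM0⟩ := exists_nat_gt (R0 / h)
  set M : ℕ := max M0 (p.natDegree + 1 + N) with hMdef
  have hMR : R0 < M * h := by
    rw [← div_lt_iff₀ hh0]
    exact hM0.trans_le (by exact_mod_cast le_max_left _ _)
  have hout : ∀ x ∈ Set.Ioo 0 h, ∀ n : ℤ, n ∉ Finset.Icc (-(M:ℤ)) M → φ (x + n * h) = 0 := by
    intro x hx n hn
    apply hR0
    refine hMR.trans_le ?_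
    rw [Finset.mem_Icc, not_and_or] at hn
    rcases hn with hn | hn
    · have : (n : ℝ) ≤ -(M:ℝ) - 1 := by exact_mod_cast (by omega : n ≤ -(M:ℤ) - 1)
      have h2 : (n:ℝ) * h ≤ (-(M:ℝ) - 1) * h := by gcongr
      rw [le_abs]; right
      linarith [hx.2]
    · have : (M : ℝ) ≤ n := by exact_mod_cast (by omega : (M:ℤ) ≤ n)
      have h2 : (M:ℝ) * h ≤ n * h := by gcongr
      rw [le_abs]; left
      linarith [hx.1]
  have hPc : ∀ K : ℕ, Continuous (fun ξ : ℝ => ∏ j ∈ Finset.Icc 1 K, A j ((2 : ℂ) ^ (-(j : ℤ)) * ξ)) := by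
    intro K
    refine continuous_finsetProd _ fun j _ => ?_
    have hAc : Continuous (A j) := by
      rw [funext (hA j)]
      fun_prop
    exact hAc.comp (by fun_prop)
  have hG := aux_Gzero φ hcont hint s c w M h (by
    intro η hη hηs hη0
    have hHs := aux_Hs s c w M h η hηs
    obtain ⟨g, hgc, hgi, hg, hgH⟩ := aux_test _ (by
      clear_value w
      fun_prop) hHs
    refine aux_limit (fun K ξ => ∏ j ∈ Finset.Icc 1 K, A j ((2 : ℂ) ^ (-(j : ℤ)) * ξ)) φ hint D Mb ?_ hbd
      (fun ξ => hprod ξ) _ g hgc hgi hg hgH ?_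
    · exact hPc
    · filter_upwards [Filter.eventually_ge_atTop J] with K hK
      obtain ⟨n, rfl⟩ := Nat.exists_eq_add_of_le hK
      obtain ⟨ι, _, v, t, ht, hz⟩ := aux_repV N coef A hA J n
      rw [aux_intF (p.natDegree + 1) p.coeff h v t _ g _ hgc hg hgH]
      · apply Finset.sum_eq_zero
        intro i _
        rw [aux_Hzero N (p.natDegree + 1) M (le_max_right _ _) h hh0 p.coeff s c w
          (fun i => Complex.exp_ne_zero _) hrel η hη0 (t i) (ht i).1, mul_zero]
        refine (ht i).2.trans ?_
        have : (0:ℝ) ≤ ((2:ℝ) ^ (J + n))⁻¹ := by positivity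
        gcongr
        linarith
      · intro ξ
        rw [hz, hp, Polynomial.eval_eq_sum_range]
        congr 1
        apply Finset.sum_congr rfl
        intro m _
        rw [← Complex.exp_nat_mul]
        congr 2
        push_cast; ring)
  -- the coefficients
  set d : ℤ → ℂ := fun l => ∑ i ∈ s, c i * (if (2:ℤ) ^ J ∣ l - i then fourierExt φ (α + l) else 0) with hd
  have hdz : d i0 = 0 := by
    refine aux_uniq d ((∑ i ∈ s, ‖c i‖) * C') q hq ?_ h hh0 ?_ i0
    · intro n
      simp only [hd]
      refine (norm_sum_le _ _).trans ?_
      rw [mul_assoc, Finset.sum_mul]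
      apply Finset.sum_le_sum
      intro i _
      rw [norm_mul]
      gcongr
      split_ifs
      · exact hdecay n
      · rw [norm_zero]; have := hq.1; positivity
    · intro x hx
      have hser := fun i => (aux_series φ hcont hsupp α C' q hq hdecay J i x M (hout x hx)).mul_left (c i)
      have hS := hasSum_sum (s := s) (fun i _ => hser i)
      have hz : ∑ i ∈ s, c i * ((((2:ℝ) ^ J : ℝ) : ℂ)⁻¹ * Complex.exp (-(2 * (Real.pi : ℂ) * Complex.I * α * x)) *
        ∑ n ∈ Finset.Icc (-(M:ℤ)) M,
          Complex.exp (-(2 * (Real.pi : ℂ) * Complex.I * ((((2:ℝ) ^ J)⁻¹ : ℝ) : ℂ) * (α + i))) ^ n * φ (x + n * ((2:ℝ) ^ J)⁻¹)) = 0 := by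
        simp_rw [mul_left_comm (c _)]
        rw [← Finset.mul_sum]
        have := hG x hx
        simp only [hw] at this
        rw [this, mul_zero]
      rw [hz] at hS
      have := hS.tsum_eq
      rw [← this]
      congr 1; ext l
      simp only [hd]
      rw [Finset.sum_mul]
      apply Finset.sum_congr rfl
      intro i _
      ring
  have : d i0 = c i0 * fourierExt φ (α + i0) := by
    simp only [hd]
    rw [Finset.sum_eq_single i0]
    · simp
    · intro i hi hne
      rw [if_neg, mul_zero]
      intro hdv
      exact hne (hJ i0 hi0 i hi hdv).symm
    · intro hn; exact absurd hi0 hn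
  rw [this] at hdz
  exact (mul_ne_zero hci0 (hsub i0 hi0)) hdz
end

section
/- Let N ∈ ℕ and C > 0, and for each j ∈ ℕ let a_j(y) = Σ_{m=0}^N a_{j,m}·e^{−2πi m y} be a trigonometric polynomial of degree at most N with a_j(0) = 1 and sup_{y∈ℝ}|a_j(y)| ≤ C. Let φ : ℝ → ℂ be continuous, integrable and compactly supported with φ̂(z) = Π_{j=1}^∞ a_j(2^{−j} z) for all z ∈ ℂ (pointwise limit of partial products). Let α ∈ ℂ, d ∈ ℕ₀ with d ≤ N, and suppose there exist C' > 0 and q ∈ (0,1) such that |φ̂^{(k)}(α + ℓ)| ≤ C'·q^{|ℓ|} for all ℓ ∈ ℤ and k = 0, …, d. Then the set { (k,ℓ) : 0 ≤ k ≤ d, ℓ ∈ ℤ, φ̂^{(k)}(α + ℓ) ≠ 0 } contains at most N elements. -/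
open MeasureTheory

lemma ft_integrable (f : ℝ → ℂ) (hf : Continuous f) (hs : HasCompactSupport f) (g : ℝ → ℂ)
    (hg : Continuous g) : Integrable (fun x => f x * g x) :=
  (hf.mul hg).integrable_of_hasCompactSupport hs.mul_right

lemma ft_hasDerivAt (f : ℝ → ℂ) (hf : Continuous f) (hs : HasCompactSupport f) (w : ℂ) :
    HasDerivAt (fourierExt f)
      (fourierExt (fun x => (-(2 * (Real.pi : ℂ) * Complex.I * (x : ℂ))) * f x) w) w := by
  unfold fourierExt
  have key := hasDerivAt_integral_of_dominated_loc_of_deriv_le (𝕜 := ℂ) (μ := volume)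
    (s := Metric.ball w 1) (x₀ := w)
    (F := fun z (x : ℝ) => f x * Complex.exp (-(2 * (Real.pi : ℂ) * Complex.I * (x : ℂ) * z)))
    (F' := fun z (x : ℝ) => (-(2 * (Real.pi : ℂ) * Complex.I * (x : ℂ))) * f x *
      Complex.exp (-(2 * (Real.pi : ℂ) * Complex.I * (x : ℂ) * z)))
    (bound := fun x : ℝ => ‖f x‖ * (2 * Real.pi * |x| * Real.exp (2 * Real.pi * |x| * (‖w‖ + 1))))
    (Metric.ball_mem_nhds w one_pos) ?_ ?_ ?_ ?_ ?_ ?_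
  · exact key.2
  · filter_upwards with z
    exact (by fun_prop : Continuous _).aestronglyMeasurable
  · exact ft_integrable f hf hs _ (by fun_prop)
  · exact (by fun_prop : Continuous _).aestronglyMeasurable
  · filter_upwards with x z hz
    have hz' : ‖z‖ ≤ ‖w‖ + 1 := by
      have : ‖z - w‖ < 1 := by simpa [dist_eq_norm] using hz
      have h2 := norm_add_le w (z - w)
      rw [add_sub_cancel] at h2
      linarith
    have h1 : ‖Complex.exp (-(2 * (Real.pi : ℂ) * Complex.I * (x : ℂ) * z))‖ ≤
        Real.exp (2 * Real.pi * |x| * (‖w‖ + 1)) := by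
      refine (Complex.norm_exp_le_exp_norm _).trans (Real.exp_le_exp.2 ?_)
      simp only [norm_neg, norm_mul, Complex.norm_real, Complex.norm_I, Real.norm_eq_abs,
        abs_of_pos Real.pi_pos, Complex.norm_ofNat, mul_one]
      gcongr
    rw [norm_mul, norm_mul]
    have h3 : ‖(-(2 * (Real.pi : ℂ) * Complex.I * (x : ℂ)))‖ = 2 * Real.pi * |x| := by
      simp [abs_of_pos Real.pi_pos]
    rw [h3, mul_comm (2 * Real.pi * |x|) ‖f x‖, mul_assoc]
    gcongr
  · exact (by fun_prop : Continuous _).integrable_of_hasCompactSupport hs.norm.mul_right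
  · filter_upwards with x z hz
    have h := ((hasDerivAt_id z).const_mul (-(2 * (Real.pi : ℂ) * Complex.I * (x : ℂ)))).cexp.const_mul (f x)
    convert! h using 1
    · ext y; simp
    · simp; ring

lemma ft_iteratedDeriv (f : ℝ → ℂ) (hf : Continuous f) (hs : HasCompactSupport f) (k : ℕ) :
    iteratedDeriv k (fourierExt f) =
      fourierExt (fun x => (-(2 * (Real.pi : ℂ) * Complex.I * (x : ℂ))) ^ k * f x) := by
  induction k with
  | zero => simp
  | succ k ih =>
    rw [iteratedDeriv_succ, ih]
    ext w
    rw [(ft_hasDerivAt (fun x => (-(2 * (Real.pi : ℂ) * Complex.I * (x : ℂ))) ^ k * f x)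
      (by fun_prop) (hs.mul_left (f := fun x : ℝ => (-(2 * (Real.pi : ℂ) * Complex.I * (x : ℂ))) ^ k)) w).deriv]
    congr 1
    ext x
    ring

lemma ft_differentiable (f : ℝ → ℂ) (hf : Continuous f) (hs : HasCompactSupport f) :
    Differentiable ℂ (fourierExt f) := fun w => (ft_hasDerivAt f hf hs w).differentiableAt

open FourierTransform in
lemma ft_eq_fourier (f : ℝ → ℂ) (ξ : ℝ) : 𝓕 f ξ = fourierExt f ξ := by
  rw [Real.fourier_real_eq_integral_exp_smul]
  unfold fourierExt
  congr 1
  ext x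
  rw [smul_eq_mul, mul_comm]
  congr 2
  push_cast
  ring

lemma cs_isBigO (f : ℝ → ℂ) (hs : HasCompactSupport f) :
    f =O[Filter.cocompact ℝ] (fun x : ℝ => |x| ^ (-(2:ℝ))) := by
  have : f =ᶠ[Filter.cocompact ℝ] (fun _ => 0) := by
    have := hs.isCompact.compl_mem_cocompact
    filter_upwards [this] with x hx
    exact image_eq_zero_of_notMem_tsupport hx
  exact this.trans_isBigO (Asymptotics.isBigO_zero _ _)

open FourierTransform in
lemma poisson_cs (f : ℝ → ℂ) (hf : Continuous f) (hs : HasCompactSupport f)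
    (hsum : Summable fun n : ℤ => 𝓕 f (n : ℝ)) (x : ℝ) :
    ∑' n : ℤ, f (x + n) = ∑' n : ℤ, 𝓕 f n * fourier n (x : UnitAddCircle) :=
  Real.tsum_eq_tsum_fourier_of_rpow_decay_of_summable hf one_lt_two (cs_isBigO f hs) hsum x

open FourierTransform in
lemma fourier_zero_of_per_zero (f : ℝ → ℂ) (hf : Continuous f) (hs : HasCompactSupport f)
    (h0 : ∀ x : ℝ, ∑' n : ℤ, f (x + n) = 0) (m : ℤ) : 𝓕 f (m : ℝ) = 0 := by
  have hn : ∀ K : TopologicalSpace.Compacts ℝ, Summable fun n : ℤ =>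
      ‖((⟨f, hf⟩ : C(ℝ, ℂ)).comp (ContinuousMap.addRight (n : ℝ))).restrict K‖ :=
    fun K => summable_of_isBigO (Real.summable_abs_int_rpow one_lt_two)
    ((isBigO_norm_restrict_cocompact ⟨_, hf⟩ (zero_lt_one.trans one_lt_two) (cs_isBigO f hs) K).comp_tendsto
    Int.tendsto_coe_cofinite)
  have h := Real.fourierCoeff_tsum_comp_add (f := ⟨f, hf⟩) hn m
  simp only [ContinuousMap.coe_mk] at h
  rw [← h]
  have hz : (∑' n : ℤ, (⟨f, hf⟩ : C(ℝ, ℂ)).comp (ContinuousMap.addRight (n • (1:ℝ)))) = 0 := by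
    ext x
    have hsm : Summable fun n : ℤ =>
        (⟨f, hf⟩ : C(ℝ, ℂ)).comp (ContinuousMap.addRight (n • (1:ℝ))) := by
      have := ContinuousMap.summable_of_locally_summable_norm hn
      simpa using this
    rw [← ContinuousMap.tsum_apply hsm x]
    simpa using h0 x
  have hz2 : (Function.Periodic.lift <| (⟨f, hf⟩ : C(ℝ, ℂ)).periodic_tsum_comp_add_zsmul 1) = 0 := by
    ext y
    induction y using QuotientAddGroup.induction_on with
    | H y =>
      rw [Function.Periodic.lift_coe, hz]; rfl
  rw [hz2]
  simp [fourierCoeff]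

lemma analytic_fourier_series (c : ℤ → ℂ) (B q : ℝ) (hq0 : 0 < q) (hq1 : q < 1)
    (hc : ∀ n : ℤ, ‖c n‖ ≤ B * q ^ n.natAbs) :
    AnalyticOnNhd ℝ (fun x : ℝ => ∑' n : ℤ, c n * fourier n (x : UnitAddCircle)) Set.univ := by
  have hB : 0 ≤ B := by simpa using (norm_nonneg _).trans (hc 0)
  have hs0 : 0 < Real.sqrt q := Real.sqrt_pos.2 hq0
  have hs1 : Real.sqrt q < 1 := by rw [Real.sqrt_lt' one_pos]; simpa
  set δ : ℝ := - Real.log (Real.sqrt q) / (2 * Real.pi) with hδ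
  have hδpos : 0 < δ := div_pos (neg_pos.2 (Real.log_neg hs0 hs1)) (by positivity)
  have hpow : ∀ n : ℤ, q ^ n.natAbs * Real.exp (2 * Real.pi * n.natAbs * δ) = Real.sqrt q ^ n.natAbs := by
    intro n
    have : 2 * Real.pi * n.natAbs * δ = n.natAbs * (- Real.log (Real.sqrt q)) := by
      rw [hδ]; field_simp
    rw [this, Real.exp_nat_mul, ← mul_pow, Real.exp_neg, Real.exp_log hs0]
    congr 1
    nth_rw 1 [← Real.mul_self_sqrt hq0.le]
    field_simp
  have hsumm : Summable fun n : ℤ => B * Real.sqrt q ^ n.natAbs := by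
    apply Summable.mul_left
    apply Summable.of_nat_of_neg
    · simpa using summable_geometric_of_lt_one hs0.le hs1
    · simpa using summable_geometric_of_lt_one hs0.le hs1
  set U : Set ℂ := {z | |z.im| < δ} with hU
  have hUo : IsOpen U := isOpen_lt (by fun_prop) continuous_const
  have hd : DifferentiableOn ℂ (fun z : ℂ => ∑' n : ℤ, c n * Complex.exp (2 * Real.pi * Complex.I * n * z)) U := by
    apply Complex.differentiableOn_tsum_of_summable_norm hsumm _ hUo
    · intro n z hz
      rw [norm_mul, Complex.norm_exp]
      refine (mul_le_mul_of_nonneg_right (hc n) (Real.exp_nonneg _)).trans ?_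
      rw [← hpow n, ← mul_assoc]
      gcongr
      have h1 : (2 * (Real.pi:ℂ) * Complex.I * n * z).re = 2 * Real.pi * (n * (-z.im)) := by
        simp; ring
      rw [h1, mul_assoc (2 * Real.pi)]
      refine mul_le_mul_of_nonneg_left ?_ (by positivity)
      have : |(n:ℝ) * (-z.im)| ≤ n.natAbs * δ := by
        rw [abs_mul, abs_neg, Nat.cast_natAbs, Int.cast_abs]
        have := (show |z.im| < δ from hz).le
        gcongr
      exact (le_abs_self _).trans this
    · intro n; fun_prop
  intro x _
  have hx : (x : ℂ) ∈ U := by simp [hU, hδpos]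
  have ha : AnalyticAt ℂ (fun z : ℂ => ∑' n : ℤ, c n * Complex.exp (2 * Real.pi * Complex.I * n * z)) (x:ℂ) :=
    hd.analyticAt (hUo.mem_nhds hx)
  have hb : AnalyticAt ℝ (fun y : ℝ => (y : ℂ)) x := Complex.ofRealCLM.analyticAt x
  have := (ha.restrictScalars (𝕜 := ℝ)).comp_of_eq hb rfl
  convert! this using 1
  ext y
  simp only [Function.comp]
  congr 1
  ext n
  rw [fourier_coe_apply]
  simp

lemma coef_bound (N : ℕ) (C : ℝ) (c : ℕ → ℂ)
    (h : ∀ y : ℝ, ‖∑ m ∈ Finset.range (N + 1), c m * Complex.exp (-(2 * (Real.pi : ℂ) * Complex.I * (m : ℂ) * (y : ℂ)))‖ ≤ C)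
    (m : ℕ) (hm : m ∈ Finset.range (N + 1)) : ‖c m‖ ≤ C := by
  have hI : (∫ y in (0:ℝ)..1, (∑ k ∈ Finset.range (N + 1), c k * Complex.exp (-(2 * (Real.pi : ℂ) * Complex.I * (k : ℂ) * (y : ℂ))))
      * Complex.exp (2 * (Real.pi : ℂ) * Complex.I * (m : ℂ) * (y : ℂ))) = c m := by
    have h1 : ∀ y : ℝ, (∑ k ∈ Finset.range (N + 1), c k * Complex.exp (-(2 * (Real.pi : ℂ) * Complex.I * (k : ℂ) * (y : ℂ))))
      * Complex.exp (2 * (Real.pi : ℂ) * Complex.I * (m : ℂ) * (y : ℂ)) =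
        ∑ k ∈ Finset.range (N + 1), c k * Complex.exp ((2 * (Real.pi : ℂ) * Complex.I * ((m : ℂ) - k)) * (y : ℂ)) := by
      intro y
      rw [Finset.sum_mul]
      refine Finset.sum_congr rfl fun k _ => ?_
      rw [mul_assoc, ← Complex.exp_add]
      congr 2; ring
    simp_rw [h1]
    rw [intervalIntegral.integral_finsetSum]
    · rw [Finset.sum_eq_single_of_mem m hm]
      · simp
      · intro k _ hk
        have hne : (2 * (Real.pi : ℂ) * Complex.I * ((m : ℂ) - k)) ≠ 0 := by
          refine mul_ne_zero Complex.two_pi_I_ne_zero ?_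
          rw [sub_ne_zero]
          exact_mod_cast hk.symm
        rw [intervalIntegral.integral_const_mul, integral_exp_mul_complex hne]
        have : Complex.exp ((2 * (Real.pi : ℂ) * Complex.I * ((m : ℂ) - k))) = 1 := by
          have := Complex.exp_int_mul_two_pi_mul_I ((m : ℤ) - k)
          rw [← this]; congr 1; push_cast; ring
        simp [this]
    · intro k _
      exact (by fun_prop : Continuous _).intervalIntegrable _ _
  rw [← hI]
  have := intervalIntegral.norm_integral_le_of_norm_le_const (a := (0:ℝ)) (b := 1) (C := C)
    (f := fun y : ℝ => (∑ k ∈ Finset.range (N + 1), c k * Complex.exp (-(2 * (Real.pi : ℂ) * Complex.I * (k : ℂ) * (y : ℂ))))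
      * Complex.exp (2 * (Real.pi : ℂ) * Complex.I * (m : ℂ) * (y : ℂ))) ?_
  · simpa using this
  · intro y _
    rw [norm_mul]
    have h2 : ‖Complex.exp (2 * (Real.pi : ℂ) * Complex.I * (m : ℂ) * (y : ℂ))‖ = 1 := by
      rw [Complex.norm_exp]; simp
    rw [h2, mul_one]
    exact h y

lemma A_lip (N : ℕ) (C : ℝ) (c : ℕ → ℂ)
    (h : ∀ y : ℝ, ‖∑ m ∈ Finset.range (N + 1), c m * Complex.exp (-(2 * (Real.pi : ℂ) * Complex.I * (m : ℂ) * (y : ℂ)))‖ ≤ C)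
    (h0 : ∑ m ∈ Finset.range (N + 1), c m = 1) (y : ℝ) :
    ‖∑ m ∈ Finset.range (N + 1), c m * Complex.exp (-(2 * (Real.pi : ℂ) * Complex.I * (m : ℂ) * (y : ℂ)))‖
      ≤ 1 + (∑ m ∈ Finset.range (N + 1), C * (2 * Real.pi * m)) * |y| := by
  have e : ∑ m ∈ Finset.range (N + 1), c m * Complex.exp (-(2 * (Real.pi : ℂ) * Complex.I * (m : ℂ) * (y : ℂ)))
     = 1 + ∑ m ∈ Finset.range (N + 1), c m * (Complex.exp (-(2 * (Real.pi : ℂ) * Complex.I * (m : ℂ) * (y : ℂ))) - 1) := by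
    simp_rw [mul_sub, Finset.sum_sub_distrib]
    simp [h0]
  rw [e]
  refine (norm_add_le _ _).trans ?_
  rw [norm_one]
  gcongr
  rw [Finset.sum_mul]
  refine norm_sum_le_of_le _ fun m hm => ?_
  rw [norm_mul, mul_assoc C]
  have h1 := coef_bound N C c h m hm
  have h2 : ‖Complex.exp (-(2 * (Real.pi : ℂ) * Complex.I * (m : ℂ) * (y : ℂ))) - 1‖ ≤ 2 * Real.pi * m * |y| := by
    have := Real.norm_exp_I_mul_ofReal_sub_one_le (x := -(2 * Real.pi * m * y))
    have e2 : Complex.I * ((-(2 * Real.pi * m * y) : ℝ) : ℂ) = (-(2 * (Real.pi : ℂ) * Complex.I * (m : ℂ) * (y : ℂ))) := by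
      push_cast; ring
    rw [e2] at this
    refine this.trans (le_of_eq ?_)
    simp [abs_of_pos Real.pi_pos]
  exact mul_le_mul h1 h2 (norm_nonneg _) ((norm_nonneg _).trans h1)

lemma prod_growth (b : ℕ → ℝ) (hb : ∀ j, 0 ≤ b j) (D K x : ℝ) (hD : 1 ≤ D) (hK : 0 ≤ K) (p : ℕ)
    (hx : x ≤ 2 ^ p) (h1 : ∀ j, b j ≤ D) (h2 : ∀ j, b j ≤ 1 + K * ((2:ℝ) ^ (-(j : ℤ)) * x)) (J : ℕ) :
    ∏ j ∈ Finset.Icc 1 J, b j ≤ D ^ p * Real.exp K := by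
  have hA : ∀ J, ∏ j ∈ Finset.Icc 1 J, b j ≤ D ^ J := by
    intro J
    calc _ ≤ ∏ j ∈ Finset.Icc 1 J, D := Finset.prod_le_prod (fun i _ => hb i) (fun i _ => h1 i)
      _ = D ^ J := by simp
  have hB : ∀ s, ∏ j ∈ Finset.Icc 1 (p + s), b j ≤ D ^ p * Real.exp (K * (1 - (2:ℝ) ^ (-(s:ℤ)))) := by
    intro s
    induction s with
    | zero => simpa using hA p
    | succ s ih =>
      rw [← add_assoc, Finset.prod_Icc_succ_top (by omega)]
      have h3 : b (p + s + 1) ≤ Real.exp (K * (2:ℝ) ^ (-((s + 1 : ℕ):ℤ))) := by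
        refine (h2 _).trans ?_
        refine le_trans ?_ (Real.add_one_le_exp _)
        rw [add_comm]
        gcongr
        calc (2:ℝ) ^ (-((p + s + 1 : ℕ):ℤ)) * x ≤ (2:ℝ) ^ (-((p + s + 1 : ℕ):ℤ)) * 2 ^ p := by gcongr
          _ = _ := by
            rw [← zpow_natCast (2:ℝ) p, ← zpow_add₀ (by norm_num)]
            congr 1; push_cast; ring
      calc _ ≤ (D ^ p * Real.exp (K * (1 - (2:ℝ) ^ (-(s:ℤ))))) * Real.exp (K * (2:ℝ) ^ (-((s + 1 : ℕ):ℤ))) :=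
            mul_le_mul ih h3 (hb _) (by positivity)
        _ = _ := by
          rw [mul_assoc, ← Real.exp_add]
          congr 2
          have : (2:ℝ) ^ (-(s:ℤ)) = 2 * (2:ℝ) ^ (-((s + 1 : ℕ):ℤ)) := by
            rw [← zpow_one_add₀ (by norm_num)]; congr 1; push_cast; ring
          rw [this]; ring
  rcases le_total J p with h | h
  · calc _ ≤ D ^ J := hA J
      _ ≤ D ^ p := pow_le_pow_right₀ hD h
      _ ≤ _ := le_mul_of_one_le_right (by positivity) (Real.one_le_exp hK)
  · obtain ⟨s, rfl⟩ := Nat.exists_eq_add_of_le h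
    refine (hB s).trans ?_
    gcongr
    have : 0 < (2:ℝ) ^ (-(s:ℤ)) := by positivity
    nlinarith

/-- uniform polynomial growth of the partial products on the real line -/
lemma partial_growth (N : ℕ) (C : ℝ) (coef : ℕ → ℕ → ℂ) (A : ℕ → ℂ → ℂ)
    (hA : ∀ j : ℕ, ∀ y : ℂ, A j y =
      ∑ m ∈ Finset.range (N + 1), coef j m * Complex.exp (-(2 * (Real.pi : ℂ) * Complex.I * (m : ℂ) * y)))
    (hA0 : ∀ j : ℕ, A j 0 = 1)
    (hAbd : ∀ j : ℕ, ∀ y : ℝ, ‖A j ((y : ℂ))‖ ≤ C) :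
    ∃ (M : ℝ) (r : ℕ), 0 ≤ M ∧ ∀ (J : ℕ) (ξ : ℝ),
      ‖∏ j ∈ Finset.Icc 1 J, A j ((2 : ℂ) ^ (-(j : ℤ)) * (ξ : ℂ))‖ ≤ M * (1 + |ξ| ^ r) := by
  have hC1 : 1 ≤ C := by have := hAbd 0 0; simpa [hA0] using this
  obtain ⟨r, hr⟩ := pow_unbounded_of_one_lt C (one_lt_two (α := ℝ))
  set K := ∑ m ∈ Finset.range (N + 1), C * (2 * Real.pi * m) with hK
  have hK0 : 0 ≤ K := Finset.sum_nonneg fun m _ => by positivity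
  refine ⟨Real.exp K * 2 ^ r * 2 ^ (r - 1), r, by positivity, fun J ξ => ?_⟩
  have hcast : ∀ j : ℕ, (2 : ℂ) ^ (-(j : ℤ)) * (ξ : ℂ) = (((2:ℝ) ^ (-(j : ℤ)) * ξ : ℝ) : ℂ) := by
    intro j; push_cast; rfl
  obtain ⟨p, hp1, hp2⟩ := exists_nat_pow_near (x := 1 + |ξ|) (y := 2) (by simp) one_lt_two
  have h := prod_growth (fun j => ‖A j ((2 : ℂ) ^ (-(j : ℤ)) * (ξ : ℂ))‖) (fun j => norm_nonneg _) C K |ξ| hC1 hK0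
    (p + 1) (by linarith) (fun j => by rw [hcast]; exact hAbd j _) (fun j => ?_) J
  · rw [norm_prod]
    refine h.trans ?_
    have h4 : C ^ (p + 1) ≤ (2 * (1 + |ξ|)) ^ r := by
      calc C ^ (p + 1) ≤ ((2:ℝ) ^ r) ^ (p + 1) := by gcongr
        _ = (2 * 2 ^ p) ^ r := by rw [← pow_mul, ← pow_succ', ← pow_mul, mul_comm]
        _ ≤ _ := by gcongr
    have h5 : (1 + |ξ|) ^ r ≤ 2 ^ (r - 1) * (1 ^ r + |ξ| ^ r) := add_pow_le (by simp) (abs_nonneg _) r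
    calc C ^ (p + 1) * Real.exp K ≤ (2 * (1 + |ξ|)) ^ r * Real.exp K := by gcongr
      _ = Real.exp K * 2 ^ r * (1 + |ξ|) ^ r := by rw [mul_pow]; ring
      _ ≤ Real.exp K * 2 ^ r * (2 ^ (r - 1) * (1 ^ r + |ξ| ^ r)) := by gcongr
      _ = _ := by rw [one_pow]; ring
  · have h6 := A_lip N C (coef j) (fun y => by rw [← hA]; exact hAbd j y)
      (by have := hA0 j; rw [hA] at this; simpa using this) ((2:ℝ) ^ (-(j : ℤ)) * ξ)
    rw [← hA] at h6
    rw [hcast]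
    refine h6.trans (le_of_eq ?_)
    rw [abs_mul, abs_of_pos (by positivity : (0:ℝ) < 2 ^ (-(j : ℤ)))]

/-- the shift operator attached to the `j`-th mask -/
noncomputable def Iop (N : ℕ) (coef : ℕ → ℕ → ℂ) (j : ℕ) (ψ : ℝ → ℂ) (x : ℝ) : ℂ :=
  ∑ m ∈ Finset.range (N + 1), coef j m * ψ (x + m * (2:ℝ) ^ (-(j : ℤ)))

/-- composition of the mask operators with indices `s+1,…,s+J` -/
noncomputable def Uop (N : ℕ) (coef : ℕ → ℕ → ℂ) (s : ℕ) : ℕ → (ℝ → ℂ) → (ℝ → ℂ)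
  | 0, ψ => ψ
  | J + 1, ψ => Uop N coef s J (Iop N coef (s + J + 1) ψ)

lemma Uop_split (N : ℕ) (coef : ℕ → ℕ → ℂ) (j J : ℕ) (ψ : ℝ → ℂ) :
    Uop N coef 0 (j + J) ψ = Uop N coef 0 j (Uop N coef j J ψ) := by
  induction J generalizing ψ with
  | zero => rfl
  | succ J ih =>
    have : j + (J + 1) = (j + J) + 1 := rfl
    rw [this, Uop, ih, Uop]
    simp only [zero_add]

lemma Uop_rep (N : ℕ) (coef : ℕ → ℕ → ℂ) (j : ℕ) :
    ∃ (ι : Type) (_ : Fintype ι) (c : ι → ℂ) (e : ι → ℕ), ∀ (ψ : ℝ → ℂ) (x : ℝ),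
      Uop N coef 0 j ψ x = ∑ i, c i * ψ (x + e i * (2:ℝ) ^ (-(j : ℤ))) := by
  induction j with
  | zero => exact ⟨Unit, inferInstance, fun _ => 1, fun _ => 0, fun ψ x => by simp [Uop]⟩
  | succ j ih =>
    obtain ⟨ι, _, c, e, h⟩ := ih
    refine ⟨ι × Fin (N + 1), inferInstance, fun p => c p.1 * coef (j + 1) p.2,
      fun p => 2 * e p.1 + p.2, fun ψ x => ?_⟩
    rw [Uop, h, Fintype.sum_prod_type]
    refine Finset.sum_congr rfl fun i _ => ?_
    rw [Iop, Finset.mul_sum, Finset.sum_range]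
    refine Finset.sum_congr rfl fun m _ => ?_
    rw [zero_add, mul_assoc]
    congr 3
    have : (2:ℝ) ^ (-(j:ℤ)) = 2 * (2:ℝ) ^ (-((j + 1 : ℕ):ℤ)) := by
      rw [← zpow_one_add₀ (by norm_num)]; congr 1; push_cast; ring
    rw [this]; push_cast; ring

lemma Uop_supp (N : ℕ) (coef : ℕ → ℕ → ℂ) (j J : ℕ) (ψ : ℝ → ℂ) (x : ℝ)
    (hx : Uop N coef j J ψ x ≠ 0) :
    ∃ p : ℝ, 0 ≤ p ∧ p ≤ N * ((2:ℝ) ^ (-(j:ℤ)) - (2:ℝ) ^ (-((j + J : ℕ):ℤ))) ∧ ψ (x + p) ≠ 0 := by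
  induction J generalizing ψ with
  | zero => exact ⟨0, le_rfl, by simp, by simpa [Uop] using hx⟩
  | succ J ih =>
    rw [Uop] at hx
    obtain ⟨p, hp0, hp1, hp2⟩ := ih _ hx
    obtain ⟨m, hm, hm2⟩ := Finset.exists_ne_zero_of_sum_ne_zero hp2
    have hm3 : (m:ℝ) ≤ N := by
      have := Finset.mem_range.1 hm
      exact_mod_cast (by omega : m ≤ N)
    refine ⟨p + m * (2:ℝ) ^ (-((j + J + 1 : ℕ):ℤ)), by positivity, ?_, ?_⟩
    · have : (2:ℝ) ^ (-((j + J : ℕ):ℤ)) = 2 * (2:ℝ) ^ (-((j + J + 1 : ℕ):ℤ)) := by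
        rw [← zpow_one_add₀ (by norm_num)]; congr 1; push_cast; ring
      rw [this] at hp1
      have h4 : (m:ℝ) * (2:ℝ) ^ (-((j + J + 1 : ℕ):ℤ)) ≤ N * (2:ℝ) ^ (-((j + J + 1 : ℕ):ℤ)) := by gcongr
      rw [← add_assoc]
      linarith
    · rw [← add_assoc]
      exact right_ne_zero_of_mul hm2

lemma exp_real_norm (a : ℝ) (z : ℂ) (hz : z = (a : ℂ) * Complex.I) : ‖Complex.exp z‖ = 1 := by
  rw [hz, Complex.norm_exp_ofReal_mul_I]

lemma Iop_fourier (N : ℕ) (coef : ℕ → ℕ → ℂ) (A : ℕ → ℂ → ℂ)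
    (hA : ∀ j : ℕ, ∀ y : ℂ, A j y =
      ∑ m ∈ Finset.range (N + 1), coef j m * Complex.exp (-(2 * (Real.pi : ℂ) * Complex.I * (m : ℂ) * y)))
    (j : ℕ) (g : ℝ → ℂ) (hg : Integrable g) :
    Iop N coef j (fun x : ℝ => fourierExt g x) =
      fun x : ℝ => fourierExt (fun ξ => g ξ * A j ((2 : ℂ) ^ (-(j : ℤ)) * (ξ : ℂ))) x := by
  ext x
  unfold Iop fourierExt
  simp_rw [hA, Finset.mul_sum, Finset.sum_mul]
  rw [integral_finsetSum]
  · refine Finset.sum_congr rfl fun m _ => ?_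
    rw [← integral_const_mul]
    congr 1
    ext ξ
    have : Complex.exp (-(2 * (Real.pi : ℂ) * Complex.I * (ξ : ℂ) * ((x + m * (2:ℝ) ^ (-(j : ℤ)) : ℝ) : ℂ)))
      = Complex.exp (-(2 * (Real.pi : ℂ) * Complex.I * (m : ℂ) * ((2 : ℂ) ^ (-(j : ℤ)) * (ξ : ℂ)))) *
        Complex.exp (-(2 * (Real.pi : ℂ) * Complex.I * (ξ : ℂ) * (x : ℂ))) := by
      rw [← Complex.exp_add]
      congr 1; push_cast; ring
    rw [this]; ring
  · intro m _
    have : Integrable fun ξ : ℝ => (coef j m * Complex.exp (-(2 * (Real.pi : ℂ) * Complex.I * (m : ℂ) * ((2 : ℂ) ^ (-(j : ℤ)) * (ξ : ℂ)))) *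
        Complex.exp (-(2 * (Real.pi : ℂ) * Complex.I * (ξ : ℂ) * (x : ℂ)))) * g ξ := by
      refine hg.bdd_mul (c := ‖coef j m‖) (by fun_prop : Continuous _).aestronglyMeasurable ?_
      filter_upwards with ξ
      rw [norm_mul, norm_mul, exp_real_norm (-(2 * Real.pi * m * ((2:ℝ) ^ (-(j : ℤ)) * ξ))),
        exp_real_norm (-(2 * Real.pi * ξ * x))]
      · simp
      · push_cast; ring
      · push_cast; ring
    refine this.congr ?_
    filter_upwards with ξ
    ring

lemma A_cont (N : ℕ) (coef : ℕ → ℕ → ℂ) (A : ℕ → ℂ → ℂ)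
    (hA : ∀ j : ℕ, ∀ y : ℂ, A j y =
      ∑ m ∈ Finset.range (N + 1), coef j m * Complex.exp (-(2 * (Real.pi : ℂ) * Complex.I * (m : ℂ) * y)))
    (j : ℕ) : Continuous (A j) := by
  rw [show A j = _ from funext (hA j)]
  fun_prop

lemma Uop_fourier (N : ℕ) (C : ℝ) (coef : ℕ → ℕ → ℂ) (A : ℕ → ℂ → ℂ)
    (hA : ∀ j : ℕ, ∀ y : ℂ, A j y =
      ∑ m ∈ Finset.range (N + 1), coef j m * Complex.exp (-(2 * (Real.pi : ℂ) * Complex.I * (m : ℂ) * y)))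
    (hAbd : ∀ j : ℕ, ∀ y : ℝ, ‖A j ((y : ℂ))‖ ≤ C)
    (J : ℕ) (g : ℝ → ℂ) (hg : Integrable g) :
    Uop N coef 0 J (fun x : ℝ => fourierExt g x) =
      fun x : ℝ => fourierExt (fun ξ => g ξ * ∏ j ∈ Finset.Icc 1 J, A j ((2 : ℂ) ^ (-(j : ℤ)) * (ξ : ℂ))) x := by
  induction J generalizing g with
  | zero => simp [Uop]
  | succ J ih =>
    rw [Uop, Iop_fourier N coef A hA _ g hg, ih]
    · ext x
      congr 1
      ext ξ
      rw [Finset.prod_Icc_succ_top (by omega), zero_add]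
      ring
    · have hc := A_cont N coef A hA (0 + J + 1)
      have : Integrable fun ξ : ℝ => A (0 + J + 1) ((2 : ℂ) ^ (-((0 + J + 1 : ℕ) : ℤ)) * (ξ : ℂ)) * g ξ := by
        refine hg.bdd_mul (c := C) (by fun_prop : Continuous _).aestronglyMeasurable ?_
        filter_upwards with ξ
        have := hAbd (0 + J + 1) ((2 : ℝ) ^ (-((0 + J + 1 : ℕ) : ℤ)) * ξ)
        push_cast at this ⊢
        exact this
      simpa only [mul_comm] using this

open FourierTransform in
lemma weak_limit (N : ℕ) (C : ℝ) (coef : ℕ → ℕ → ℂ) (A : ℕ → ℂ → ℂ)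
    (hA : ∀ j : ℕ, ∀ y : ℂ, A j y =
      ∑ m ∈ Finset.range (N + 1), coef j m * Complex.exp (-(2 * (Real.pi : ℂ) * Complex.I * (m : ℂ) * y)))
    (hA0 : ∀ j : ℕ, A j 0 = 1)
    (hAbd : ∀ j : ℕ, ∀ y : ℝ, ‖A j ((y : ℂ))‖ ≤ C)
    (φ : ℝ → ℂ) (hint : Integrable φ)
    (hprod : ∀ z : ℂ, Filter.Tendsto
      (fun J : ℕ => ∏ j ∈ Finset.Icc 1 J, A j ((2 : ℂ) ^ (-(j : ℤ)) * z))
      Filter.atTop (nhds (fourierExt φ z)))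
    (ψ : ℝ → ℂ) (hψ : ContDiff ℝ (⊤ : ℕ∞) ψ) (hψs : HasCompactSupport ψ) (x : ℝ) :
    Filter.Tendsto (fun J => Uop N coef 0 J ψ x) Filter.atTop
      (nhds (∫ y, φ y * ψ (x + y))) := by
  obtain ⟨M, r, hM0, hM⟩ := partial_growth N C coef A hA hA0 hAbd
  set g : SchwartzMap ℝ ℂ := 𝓕⁻ (hψs.toSchwartzMap hψ) with hg
  have hFg : ∀ y : ℝ, fourierExt g y = ψ y := by
    intro y
    rw [← ft_eq_fourier, ← SchwartzMap.fourier_coe, hg, FourierTransform.fourier_fourierInv_eq]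
    rfl
  have hψe : ψ = fun y : ℝ => fourierExt g y := by ext y; rw [hFg]
  have hU : ∀ J, Uop N coef 0 J ψ x = fourierExt (fun ξ => g ξ * ∏ j ∈ Finset.Icc 1 J, A j ((2 : ℂ) ^ (-(j : ℤ)) * (ξ : ℂ))) x := by
    intro J
    rw [hψe, Uop_fourier N C coef A hA hAbd J g g.integrable]
  simp_rw [hU]
  have hnorm : ∀ ξ : ℝ, ‖Complex.exp (-(2 * (Real.pi : ℂ) * Complex.I * (ξ : ℂ) * (x : ℂ)))‖ = 1 := by
    intro ξ
    exact exp_real_norm (-(2 * Real.pi * ξ * x)) _ (by push_cast; ring)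
  have hlim : (∫ y, φ y * ψ (x + y)) =
      ∫ ξ : ℝ, g ξ * fourierExt φ ξ * Complex.exp (-(2 * (Real.pi : ℂ) * Complex.I * (ξ : ℂ) * (x : ℂ))) := by
    set G : ℝ → ℂ := fun ξ => g ξ * Complex.exp (-(2 * (Real.pi : ℂ) * Complex.I * (ξ : ℂ) * (x : ℂ))) with hG
    have hGi : Integrable G := by
      have : Integrable fun ξ : ℝ => Complex.exp (-(2 * (Real.pi : ℂ) * Complex.I * (ξ : ℂ) * (x : ℂ))) * g ξ := by
        refine g.integrable.bdd_mul (c := 1) (by fun_prop : Continuous _).aestronglyMeasurable ?_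
        filter_upwards with ξ
        rw [hnorm]
      refine this.congr ?_
      filter_upwards with ξ
      rw [hG]; ring
    have hGF : ∀ y : ℝ, 𝓕 G y = ψ (x + y) := by
      intro y
      rw [ft_eq_fourier, ← hFg]
      unfold fourierExt
      congr 1
      ext ξ
      rw [hG]
      simp only
      rw [mul_assoc, ← Complex.exp_add]
      congr 2; push_cast; ring
    have key : ∫ ξ : ℝ, 𝓕 φ ξ • G ξ = ∫ y : ℝ, φ y • 𝓕 G y := by
      simpa using! VectorFourier.integral_fourierIntegral_smul_eq_flip (L := innerₗ ℝ)
        Real.continuous_fourierChar continuous_inner hint hGi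
    simp_rw [hGF, ft_eq_fourier, smul_eq_mul] at key
    rw [← key]
    congr 1
    ext ξ
    rw [hG]; ring
  rw [hlim]
  refine tendsto_integral_of_dominated_convergence (fun ξ => M * (‖g ξ‖ + ‖ξ‖ ^ r * ‖g ξ‖)) ?_ ?_ ?_ ?_
  · intro J
    have hc := A_cont N coef A hA
    exact (by fun_prop : Continuous _).aestronglyMeasurable
  · exact (g.integrable.norm.add (g.integrable_pow_mul volume r)).const_mul M
  · intro J
    filter_upwards with ξ
    rw [norm_mul, norm_mul, hnorm, mul_one]
    calc _ ≤ ‖g ξ‖ * (M * (1 + |ξ| ^ r)) := by gcongr; exact hM J ξ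
      _ = _ := by rw [Real.norm_eq_abs]; ring
  · filter_upwards with ξ
    exact ((hprod ξ).const_mul _).mul_const _

/-- the sums `∑ n^k e^{-2πiαn} f(x+n)` -/
noncomputable def Gs (f : ℝ → ℂ) (α : ℂ) (k : ℕ) (x : ℝ) : ℂ :=
  ∑' n : ℤ, ((n : ℂ) ^ k * Complex.exp (-(2 * (Real.pi : ℂ) * Complex.I * α * n))) * f (x + n)

/-- the modulated function `y^k f(y) e^{-2πiαy}` -/
noncomputable def um (f : ℝ → ℂ) (α : ℂ) (k : ℕ) (y : ℝ) : ℂ :=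
  ((y : ℂ) ^ k * Complex.exp (-(2 * (Real.pi : ℂ) * Complex.I * α * y))) * f y

lemma cs_bound (f : ℝ → ℂ) (hs : HasCompactSupport f) : ∃ R : ℝ, ∀ y, R < |y| → f y = 0 := by
  obtain ⟨R, hR⟩ := hs.isCompact.isBounded.exists_norm_le
  refine ⟨R, fun y hy => image_eq_zero_of_notMem_tsupport fun h => ?_⟩
  have := hR y h
  rw [Real.norm_eq_abs] at this
  linarith

lemma tsum_cs (f : ℝ → ℂ) (R : ℝ) (hR : ∀ y, R < |y| → f y = 0) (c : ℤ → ℂ) (x : ℝ) (M : ℕ)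
    (hM : |x| + R ≤ M) :
    ∑' n : ℤ, c n * f (x + n) = ∑ n ∈ Finset.Icc (-(M:ℤ)) M, c n * f (x + n) := by
  refine tsum_eq_sum fun n hn => ?_
  rw [hR, mul_zero]
  have h1 : (M:ℤ) < |n| := by
    rw [Finset.mem_Icc, ← abs_le] at hn
    omega
  have h2 : (M:ℝ) < |(n:ℝ)| := by exact_mod_cast h1
  have h3 : |(n:ℝ)| ≤ |x + n| + |x| := by
    have := abs_sub (x + n) x
    simpa using this
  linarith

lemma Gs_eq (f : ℝ → ℂ) (R : ℝ) (hR : ∀ y, R < |y| → f y = 0) (α : ℂ) (k : ℕ) (x : ℝ) (M : ℕ)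
    (hM : |x| + R ≤ M) :
    Gs f α k x = ∑ n ∈ Finset.Icc (-(M:ℤ)) M,
      ((n : ℂ) ^ k * Complex.exp (-(2 * (Real.pi : ℂ) * Complex.I * α * n))) * f (x + n) :=
  tsum_cs f R hR _ x M hM

lemma um_eq (f : ℝ → ℂ) (R : ℝ) (hR : ∀ y, R < |y| → f y = 0) (α : ℂ) (k : ℕ) (x : ℝ) (M : ℕ)
    (hM : |x| + R ≤ M) :
    ∑' n : ℤ, um f α k (x + n) = ∑ n ∈ Finset.Icc (-(M:ℤ)) M, um f α k (x + n) := by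
  have := tsum_cs f R hR (fun n => (((x + n : ℝ)) : ℂ) ^ k * Complex.exp (-(2 * (Real.pi : ℂ) * Complex.I * α * ((x + n : ℝ) : ℂ)))) x M hM
  exact this

lemma Gs_of_um (f : ℝ → ℂ) (hs : HasCompactSupport f) (α : ℂ) (k : ℕ) (x : ℝ) :
    Gs f α k x = Complex.exp (2 * (Real.pi : ℂ) * Complex.I * α * x) *
      ∑ i ∈ Finset.range (k + 1), ((-(x:ℂ)) ^ (k - i) * (k.choose i)) * ∑' n : ℤ, um f α i (x + n) := by
  obtain ⟨R, hR⟩ := cs_bound f hs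
  obtain ⟨M, hM⟩ := exists_nat_ge (|x| + R)
  rw [Gs_eq f R hR α k x M hM]
  simp_rw [um_eq f R hR α _ x M hM, Finset.mul_sum]
  rw [Finset.sum_comm]
  refine Finset.sum_congr rfl fun n _ => ?_
  have h1 : (n:ℂ) ^ k = ((x + n : ℂ) + (-x)) ^ k := by congr 1; ring
  have h2 : Complex.exp (-(2 * (Real.pi : ℂ) * Complex.I * α * n)) =
      Complex.exp (2 * (Real.pi : ℂ) * Complex.I * α * x) * Complex.exp (-(2 * (Real.pi : ℂ) * Complex.I * α * ((x + n : ℝ):ℂ))) := by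
    rw [← Complex.exp_add]; congr 1; push_cast; ring
  rw [h1, h2, add_pow, Finset.sum_mul, Finset.sum_mul]
  refine Finset.sum_congr rfl fun i _ => ?_
  unfold um
  push_cast
  ring

lemma um_of_Gs (f : ℝ → ℂ) (hs : HasCompactSupport f) (α : ℂ) (k : ℕ) (x : ℝ) :
    ∑' n : ℤ, um f α k (x + n) = Complex.exp (-(2 * (Real.pi : ℂ) * Complex.I * α * x)) *
      ∑ i ∈ Finset.range (k + 1), ((x:ℂ) ^ (k - i) * (k.choose i)) * Gs f α i x := by
  obtain ⟨R, hR⟩ := cs_bound f hs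
  obtain ⟨M, hM⟩ := exists_nat_ge (|x| + R)
  rw [um_eq f R hR α k x M hM]
  simp_rw [Gs_eq f R hR α _ x M hM, Finset.mul_sum]
  rw [Finset.sum_comm]
  refine Finset.sum_congr rfl fun n _ => ?_
  unfold um
  have h1 : ((x + n : ℝ):ℂ) ^ k = ((n:ℂ) + x) ^ k := by congr 1; push_cast; ring
  have h2 : Complex.exp (-(2 * (Real.pi : ℂ) * Complex.I * α * ((x + n : ℝ):ℂ))) =
      Complex.exp (-(2 * (Real.pi : ℂ) * Complex.I * α * x)) * Complex.exp (-(2 * (Real.pi : ℂ) * Complex.I * α * n)) := by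
    rw [← Complex.exp_add]; congr 1; push_cast; ring
  rw [h1, h2, add_pow, Finset.sum_mul, Finset.sum_mul]
  refine Finset.sum_congr rfl fun i _ => ?_
  ring

lemma um_cont (f : ℝ → ℂ) (hf : Continuous f) (α : ℂ) (k : ℕ) : Continuous (um f α k) := by
  unfold um; fun_prop

lemma um_cs (f : ℝ → ℂ) (hs : HasCompactSupport f) (α : ℂ) (k : ℕ) :
    HasCompactSupport (um f α k) :=
  hs.mul_left (f := fun y : ℝ => (y : ℂ) ^ k * Complex.exp (-(2 * (Real.pi : ℂ) * Complex.I * α * y)))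

open FourierTransform in
lemma um_fourier (f : ℝ → ℂ) (hf : Continuous f) (hs : HasCompactSupport f) (α : ℂ) (k : ℕ) (n : ℤ) :
    iteratedDeriv k (fourierExt f) (α + n) = (-(2 * (Real.pi : ℂ) * Complex.I)) ^ k * 𝓕 (um f α k) (n : ℝ) := by
  rw [ft_iteratedDeriv f hf hs, ft_eq_fourier]
  unfold fourierExt um
  rw [← integral_const_mul]
  congr 1
  ext x
  have h2 : Complex.exp (-(2 * (Real.pi : ℂ) * Complex.I * x * (α + n))) =
      Complex.exp (-(2 * (Real.pi : ℂ) * Complex.I * α * x)) * Complex.exp (-(2 * (Real.pi : ℂ) * Complex.I * x * ((n:ℝ):ℂ))) := by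
    rw [← Complex.exp_add]; congr 1; push_cast; ring
  rw [h2]; ring

open FourierTransform in
lemma Gs_analytic (f : ℝ → ℂ) (hf : Continuous f) (hs : HasCompactSupport f) (α : ℂ) (d : ℕ)
    (C' : ℝ) (q : ℝ) (hq : q ∈ Set.Ioo (0 : ℝ) 1)
    (hdecay : ∀ k ≤ d, ∀ ℓ : ℤ,
      ‖iteratedDeriv k (fourierExt f) (α + (ℓ : ℂ))‖ ≤ C' * q ^ ℓ.natAbs) (k : ℕ) (hk : k ≤ d) :
    AnalyticOnNhd ℝ (Gs f α k) Set.univ := by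
  have hP : ∀ i ≤ d, AnalyticOnNhd ℝ (fun x : ℝ => ∑' n : ℤ, um f α i (x + n)) Set.univ := by
    intro i hi
    have hb : ∀ n : ℤ, ‖𝓕 (um f α i) (n : ℝ)‖ ≤ (C' / (2 * Real.pi) ^ i) * q ^ n.natAbs := by
      intro n
      have h := hdecay i hi n
      rw [um_fourier f hf hs, norm_mul] at h
      have h3 : ‖(-(2 * (Real.pi : ℂ) * Complex.I)) ^ i‖ = (2 * Real.pi) ^ i := by
        simp [abs_of_pos Real.pi_pos]
      rw [h3] at h
      rw [div_mul_eq_mul_div, le_div_iff₀ (by positivity), mul_comm]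
      exact h
    have hsm : Summable fun n : ℤ => 𝓕 (um f α i) (n : ℝ) := by
      refine Summable.of_norm_bounded (g := fun n : ℤ => (C' / (2 * Real.pi) ^ i) * q ^ n.natAbs) ?_ hb
      apply Summable.mul_left
      apply Summable.of_nat_of_neg
      · simpa using summable_geometric_of_lt_one hq.1.le hq.2
      · simpa using summable_geometric_of_lt_one hq.1.le hq.2
    have := analytic_fourier_series _ _ q hq.1 hq.2 hb
    convert! this using 1
    ext x
    exact poisson_cs _ (um_cont f hf α i) (um_cs f hs α i) hsm x
  have he : AnalyticOnNhd ℝ (fun x : ℝ => (x : ℂ)) Set.univ := fun x _ => Complex.ofRealCLM.analyticAt x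
  rw [show Gs f α k = _ from funext (Gs_of_um f hs α k)]
  refine AnalyticOnNhd.mul ?_ ?_
  · have h1 : AnalyticOnNhd ℝ (fun x : ℝ => 2 * (Real.pi : ℂ) * Complex.I * α * x) Set.univ :=
      analyticOnNhd_const.mul he
    exact fun x hx => ((analyticAt_cexp (z := _)).restrictScalars (𝕜 := ℝ)).comp_of_eq (h1 x hx) rfl
  · refine Finset.analyticOnNhd_fun_sum _ fun i hi => ?_
    exact ((he.neg.pow _).mul analyticOnNhd_const).mul (hP i (by have := Finset.mem_range.1 hi; omega))

lemma pairing (N : ℕ) (C : ℝ) (coef : ℕ → ℕ → ℂ) (A : ℕ → ℂ → ℂ)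
    (hA : ∀ j : ℕ, ∀ y : ℂ, A j y =
      ∑ m ∈ Finset.range (N + 1), coef j m * Complex.exp (-(2 * (Real.pi : ℂ) * Complex.I * (m : ℂ) * y)))
    (hA0 : ∀ j : ℕ, A j 0 = 1)
    (hAbd : ∀ j : ℕ, ∀ y : ℝ, ‖A j ((y : ℂ))‖ ≤ C)
    (φ : ℝ → ℂ) (hcont : Continuous φ) (hint : Integrable φ) (hsupp : HasCompactSupport φ)
    (hprod : ∀ z : ℂ, Filter.Tendsto
      (fun J : ℕ => ∏ j ∈ Finset.Icc 1 J, A j ((2 : ℂ) ^ (-(j : ℤ)) * z))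
      Filter.atTop (nhds (fourierExt φ z)))
    (α : ℂ) (j : ℕ) (k : ℕ) (i : ℤ) :
    ∃ b : Fin N → ℂ, ∀ ψ : ℝ → ℂ, ContDiff ℝ (⊤ : ℕ∞) ψ → HasCompactSupport ψ →
      (∀ x, ψ x ≠ 0 → x ∈ Set.Ioo (0:ℝ) ((2:ℝ) ^ (-(j:ℤ)))) →
      Filter.Tendsto (fun J => ∑ r : Fin N, b r * Uop N coef j J ψ (-(r * (2:ℝ) ^ (-(j:ℤ))))) Filter.atTop
        (nhds (∫ x, ψ x * Gs φ α k (x + i * (2:ℝ) ^ (-(j:ℤ))))) := by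
  set h : ℝ := (2:ℝ) ^ (-(j:ℤ)) with hh
  have hpos : 0 < h := by positivity
  have hinv : (2:ℝ) ^ j * h = 1 := by
    rw [hh, ← zpow_natCast, ← zpow_add₀ (by norm_num)]; simp
  obtain ⟨R, hR⟩ := cs_bound φ hsupp
  obtain ⟨M, hM⟩ := exists_nat_ge (h + |i * h| + R)
  obtain ⟨ι, _, c, e, hrep⟩ := Uop_rep N coef j
  set κ : ℤ → ℂ := fun n => (n : ℂ) ^ k * Complex.exp (-(2 * (Real.pi : ℂ) * Complex.I * α * n)) with hκ
  refine ⟨fun r => ∑ n ∈ Finset.Icc (-(M:ℤ)) M, κ n * ∑ s : ι, c s * (if (e s : ℤ) - i - n * 2 ^ j = -(r:ℤ) then 1 else 0), ?_⟩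
  intro ψ hψ hψs hψ0
  have e1 : (∫ x, ψ x * Gs φ α k (x + i * h)) =
      ∑ n ∈ Finset.Icc (-(M:ℤ)) M, κ n * ∫ y, φ y * ψ ((-(i * h) - n) + y) := by
    have : ∀ x, ψ x * Gs φ α k (x + i * h) = ∑ n ∈ Finset.Icc (-(M:ℤ)) M, κ n * (φ (x + (i * h + n)) * ψ x) := by
      intro x
      by_cases hx : ψ x = 0
      · simp [hx]
      · have hx' := hψ0 x hx
        rw [Gs_eq φ R hR α k (x + i * h) M ?_, Finset.mul_sum]
        · refine Finset.sum_congr rfl fun n _ => ?_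
          rw [add_assoc]; ring
        · have := abs_add_le x (i * h)
          have h2 : |x| ≤ h := by rw [abs_of_pos hx'.1]; exact hx'.2.le
          linarith
    simp_rw [this]
    rw [integral_finsetSum]
    · refine Finset.sum_congr rfl fun n _ => ?_
      rw [integral_const_mul]
      congr 1
      rw [← integral_add_right_eq_self (fun y => φ y * ψ ((-(i * h) - n) + y)) (i * h + n)]
      congr 1
      ext x
      congr 2
      ring
    · intro n _
      have hc := hψ.continuous
      exact (by fun_prop : Continuous _).integrable_of_hasCompactSupport hψs.mul_left.mul_left
  have hV : ∀ J (t : ℤ), Uop N coef j J ψ (t * h) = ∑ r : Fin N, (if t = -(r:ℤ) then 1 else 0) * Uop N coef j J ψ (-(r * h)) := by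
    intro J t
    by_cases ht : Uop N coef j J ψ (t * h) = 0
    · rw [ht]
      symm
      refine Finset.sum_eq_zero fun r _ => ?_
      split_ifs with h1
      · rw [h1] at ht
        push_cast at ht
        rw [neg_mul] at ht
        rw [ht, mul_zero]
      · simp
    · obtain ⟨p, hp0, hp1, hp2⟩ := Uop_supp N coef j J ψ _ ht
      have hp3 := hψ0 _ hp2
      have hp4 : p ≤ N * h := by
        refine hp1.trans ?_
        have : 0 < (2:ℝ) ^ (-((j + J : ℕ):ℤ)) := by positivity
        gcongr
        linarith
      have h5 : (t:ℝ) < 1 := by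
        have := hp3.2
        by_contra hcon
        push Not at hcon
        have : h ≤ t * h := le_mul_of_one_le_left hpos.le hcon
        linarith [hp3.2]
      have h6 : -(N:ℝ) < t := by
        have h7 := hp3.1
        have : 0 < (t + N) * h := by linarith
        have := pos_of_mul_pos_left this hpos.le
        linarith
      have h5' : t < 1 := by exact_mod_cast h5
      have h6' : -(N:ℤ) < t := by exact_mod_cast h6
      obtain ⟨r, hr⟩ := Int.eq_ofNat_of_zero_le (by omega : 0 ≤ -t)
      have hrN : r < N := by omega
      have htr : t = -(r:ℤ) := by omega
      rw [Finset.sum_eq_single ⟨r, hrN⟩]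
      · simp [htr]
      · intro s _ hs
        rw [if_neg, zero_mul]
        intro hcon
        apply hs
        ext
        simp only
        omega
      · simp
  have e2 : ∀ J, (∑ r : Fin N, (∑ n ∈ Finset.Icc (-(M:ℤ)) M, κ n * ∑ s : ι, c s * (if (e s : ℤ) - i - n * 2 ^ j = -(r:ℤ) then 1 else 0)) * Uop N coef j J ψ (-(r * h)))
      = ∑ n ∈ Finset.Icc (-(M:ℤ)) M, κ n * Uop N coef 0 (j + J) ψ (-(i * h) - n) := by
    intro J
    simp_rw [Uop_split, hrep, Finset.sum_mul]
    rw [Finset.sum_comm]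
    refine Finset.sum_congr rfl fun n _ => ?_
    simp_rw [mul_assoc (κ n), ← Finset.mul_sum, Finset.sum_mul]
    rw [Finset.sum_comm]
    congr 1
    refine Finset.sum_congr rfl fun s _ => ?_
    simp_rw [mul_assoc (c s), ← Finset.mul_sum]
    congr 1
    rw [← hV]
    congr 1
    push_cast
    linear_combination (-(n:ℝ)) * hinv
  simp_rw [e2, e1]
  refine tendsto_finsetSum _ fun n _ => Filter.Tendsto.const_mul _ ?_
  have hw := weak_limit N C coef A hA hA0 hAbd φ hint hprod ψ hψ hψs (-(i * h) - n)
  refine hw.comp ?_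
  exact Filter.tendsto_atTop_mono (fun J => Nat.le_add_left J j) Filter.tendsto_id

lemma kernel_lemma (N : ℕ) (C : ℝ) (coef : ℕ → ℕ → ℂ) (A : ℕ → ℂ → ℂ)
    (hA : ∀ j : ℕ, ∀ y : ℂ, A j y =
      ∑ m ∈ Finset.range (N + 1), coef j m * Complex.exp (-(2 * (Real.pi : ℂ) * Complex.I * (m : ℂ) * y)))
    (hA0 : ∀ j : ℕ, A j 0 = 1)
    (hAbd : ∀ j : ℕ, ∀ y : ℝ, ‖A j ((y : ℂ))‖ ≤ C)
    (φ : ℝ → ℂ) (hcont : Continuous φ) (hint : Integrable φ) (hsupp : HasCompactSupport φ)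
    (hprod : ∀ z : ℂ, Filter.Tendsto
      (fun J : ℕ => ∏ j ∈ Finset.Icc 1 J, A j ((2 : ℂ) ^ (-(j : ℤ)) * z))
      Filter.atTop (nhds (fourierExt φ z)))
    (α : ℂ) (d j : ℕ) (han : ∀ k ≤ d, AnalyticOnNhd ℝ (Gs φ α k) Set.univ) :
    ∃ b : Fin (d + 1) × ℤ → (Fin N → ℂ), ∀ v : Fin (d + 1) × ℤ →₀ ℂ,
      Finsupp.linearCombination ℂ b v = 0 →
      Finsupp.linearCombination ℂ (fun s : Fin (d + 1) × ℤ => fun x : ℝ => Gs φ α s.1 (x + s.2 * (2:ℝ) ^ (-(j:ℤ)))) v = 0 := by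
  choose b hb using fun s : Fin (d + 1) × ℤ =>
    pairing N C coef A hA hA0 hAbd φ hcont hint hsupp hprod α j s.1 s.2
  refine ⟨b, fun v hv => ?_⟩
  set h : ℝ := (2:ℝ) ^ (-(j:ℤ)) with hh
  have hpos : 0 < h := by positivity
  set Θ := Finsupp.linearCombination ℂ (fun s : Fin (d + 1) × ℤ => fun x : ℝ => Gs φ α s.1 (x + s.2 * h)) v with hΘ
  have hΘx : ∀ x, Θ x = ∑ s ∈ v.support, v s * Gs φ α s.1 (x + s.2 * h) := by
    intro x
    rw [hΘ, Finsupp.linearCombination_apply, Finsupp.sum, Finset.sum_apply]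
    rfl
  have hHan : ∀ s : Fin (d + 1) × ℤ, AnalyticOnNhd ℝ (fun x : ℝ => Gs φ α s.1 (x + s.2 * h)) Set.univ := by
    intro s x _
    exact (han s.1 (by omega) (x + s.2 * h) (Set.mem_univ _)).comp_of_eq
      (analyticAt_id.add analyticAt_const) rfl
  have hΘan : AnalyticOnNhd ℝ Θ Set.univ := by
    rw [show Θ = _ from funext hΘx]
    exact Finset.analyticOnNhd_fun_sum _ fun s _ => analyticOnNhd_const.mul (hHan s)
  have hΘc : Continuous Θ := by
    rw [← continuousOn_univ]; exact hΘan.continuousOn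
  have hHc : ∀ s : Fin (d + 1) × ℤ, Continuous (fun x : ℝ => Gs φ α s.1 (x + s.2 * h)) := by
    intro s
    rw [← continuousOn_univ]; exact (hHan s).continuousOn
  have hae := (isOpen_Ioo (a := (0:ℝ)) (b := h)).ae_eq_zero_of_integral_contDiff_smul_eq_zero (μ := volume) (f := Θ)
    (hΘc.locallyIntegrable.locallyIntegrableOn _) ?_
  · have h0 : Set.EqOn Θ 0 (Set.Ioo 0 h) := by
      refine MeasureTheory.Measure.eqOn_open_of_ae_eq (μ := volume) ?_ isOpen_Ioo hΘc.continuousOn continuousOn_const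
      rw [Filter.EventuallyEq, ae_restrict_iff' measurableSet_Ioo]
      exact hae
    have h1 : Θ =ᶠ[nhds (h/2)] 0 :=
      h0.eventuallyEq_of_mem (Ioo_mem_nhds (by linarith) (by linarith))
    exact hΘan.eq_of_eventuallyEq analyticOnNhd_const h1
  · intro g hg hgs hgt
    set ψ : ℝ → ℂ := fun x => (g x : ℂ) with hψ
    have hψd : ContDiff ℝ (⊤ : ℕ∞) ψ := Complex.ofRealCLM.contDiff.comp hg
    have hψs : HasCompactSupport ψ := hgs.comp_left (g := fun x : ℝ => (x:ℂ)) (by simp)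
    have hψ0 : ∀ x, ψ x ≠ 0 → x ∈ Set.Ioo 0 h := by
      intro x hx
      apply hgt
      apply subset_tsupport
      simpa [hψ] using hx
    have e1 : ∫ x, g x • Θ x = ∑ s ∈ v.support, v s * ∫ x, ψ x * Gs φ α s.1 (x + s.2 * h) := by
      have : ∀ x, g x • Θ x = ∑ s ∈ v.support, v s * (ψ x * Gs φ α s.1 (x + s.2 * h)) := by
        intro x
        rw [hΘx, Complex.real_smul, Finset.mul_sum]
        refine Finset.sum_congr rfl fun s _ => ?_
        ring
      simp_rw [this]
      rw [integral_finsetSum]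
      · simp_rw [integral_const_mul]
      · intro s _
        refine Integrable.const_mul ?_ _
        exact (hψd.continuous.mul (hHc s)).integrable_of_hasCompactSupport hψs.mul_right
    rw [e1]
    have hlim : Filter.Tendsto (fun J => ∑ s ∈ v.support, v s * ∑ r : Fin N, b s r * Uop N coef j J ψ (-(r * h)))
        Filter.atTop (nhds (∑ s ∈ v.support, v s * ∫ x, ψ x * Gs φ α s.1 (x + s.2 * h))) :=
      tendsto_finsetSum _ fun s _ => (hb s ψ hψd hψs hψ0).const_mul _
    refine tendsto_nhds_unique hlim ?_
    have : ∀ J, ∑ s ∈ v.support, v s * ∑ r : Fin N, b s r * Uop N coef j J ψ (-(r * h)) = 0 := by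
      intro J
      simp_rw [Finset.mul_sum]
      rw [Finset.sum_comm]
      refine Finset.sum_eq_zero fun r _ => ?_
      simp_rw [← mul_assoc, ← Finset.sum_mul]
      have h7 := congrFun hv r
      rw [Finsupp.linearCombination_apply, Finsupp.sum, Finset.sum_apply] at h7
      simp only [Pi.smul_apply, smul_eq_mul, Pi.zero_apply] at h7
      rw [h7, zero_mul]
    simp_rw [this]
    exact tendsto_const_nhds

/-- translation by `h` as a linear map -/
noncomputable def Tr (h : ℝ) : (ℝ → ℂ) →ₗ[ℂ] (ℝ → ℂ) := LinearMap.funLeft ℂ ℂ (fun x => x + h)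

lemma Tr_pow (h : ℝ) (r : ℕ) (f : ℝ → ℂ) : ((Tr h) ^ r) f = fun x => f (x + r * h) := by
  induction r with
  | zero => simp
  | succ r ih =>
    rw [pow_succ', Module.End.mul_apply, ih]
    ext x
    simp only [Tr, LinearMap.funLeft_apply]
    congr 1; push_cast; ring

lemma poly_of_kernel (N d : ℕ) (h : ℝ) (G : ℕ → ℝ → ℂ) (b : Fin (d + 1) × ℤ → (Fin N → ℂ))
    (hb : ∀ v : Fin (d + 1) × ℤ →₀ ℂ,
      Finsupp.linearCombination ℂ b v = 0 →
      Finsupp.linearCombination ℂ (fun s : Fin (d + 1) × ℤ => fun x : ℝ => G s.1 (x + s.2 * h)) v = 0) :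
    ∃ χ : Polynomial ℂ, χ.Monic ∧ χ.natDegree ≤ N ∧ ∀ k ≤ d, ∀ x : ℝ,
      ∑ r ∈ Finset.range (χ.natDegree + 1), χ.coeff r * G k (x + r * h) = 0 := by
  set H : Fin (d + 1) × ℤ → (ℝ → ℂ) := fun s x => G s.1 (x + s.2 * h) with hH
  set L := Finsupp.linearCombination ℂ H with hL
  set B := Finsupp.linearCombination ℂ b with hB
  have hker : LinearMap.ker B ≤ LinearMap.ker L := fun v hv => hb v hv
  set E := LinearMap.range L with hE
  -- a linear map from range B onto E
  obtain ⟨P, hP⟩ : ∃ P : LinearMap.range B →ₗ[ℂ] E, Function.Surjective P := by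
    let q : (_ ⧸ LinearMap.ker B) →ₗ[ℂ] (_ ⧸ LinearMap.ker L) := Submodule.factor hker
    refine ⟨(L.quotKerEquivRange.toLinearMap ∘ₗ q) ∘ₗ B.quotKerEquivRange.symm.toLinearMap, ?_⟩
    refine (L.quotKerEquivRange.surjective.comp ?_).comp B.quotKerEquivRange.symm.surjective
    exact Submodule.factor_surjective hker
  have hfin : Module.Finite ℂ E := Module.Finite.of_surjective P hP
  have hrank : Module.finrank ℂ E ≤ N := by
    calc Module.finrank ℂ E ≤ Module.finrank ℂ (LinearMap.range B) := LinearMap.finrank_le_finrank_of_surjective hP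
      _ ≤ Module.finrank ℂ (Fin N → ℂ) := Submodule.finrank_le _
      _ = N := by simp
  have hHE : ∀ s, H s ∈ E := fun s => ⟨Finsupp.single s 1, by simp [hL]⟩
  have hinv : ∀ f ∈ E, Tr h f ∈ E := by
    intro f hf
    have : E ≤ E.comap (Tr h) := by
      conv_lhs => rw [hE, hL, Finsupp.range_linearCombination]
      rw [Submodule.span_le]
      rintro _ ⟨s, rfl⟩
      have : Tr h (H s) = H (s.1, s.2 + 1) := by
        ext x
        simp only [Tr, LinearMap.funLeft_apply, hH]
        congr 1; push_cast; ring
      change Tr h (H s) ∈ E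
      rw [this]
      exact hHE _
    exact this hf
  set T : Module.End ℂ E := (Tr h).restrict hinv with hT
  have hTpow : ∀ (r : ℕ) (f : E), (((T ^ r) f : E) : ℝ → ℂ) = fun x => (f : ℝ → ℂ) (x + r * h) := by
    intro r f
    rw [← Tr_pow, hT, Module.End.pow_restrict]
    rfl
  refine ⟨T.charpoly, T.charpoly_monic, by rw [LinearMap.charpoly_natDegree]; exact hrank, fun k hk x => ?_⟩
  have hCH := T.aeval_self_charpoly
  let f : E := ⟨H (⟨k, by omega⟩, 0), hHE _⟩
  have h1 := congrArg (fun S : Module.End ℂ E => ((S f : E) : ℝ → ℂ) x) hCH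
  simp only [Polynomial.aeval_eq_sum_range] at h1
  simp only [LinearMap.sum_apply, LinearMap.smul_apply, Submodule.coe_sum, Submodule.coe_smul, Finset.sum_apply, Pi.smul_apply, hTpow, smul_eq_mul] at h1
  simpa [f, hH] using h1

lemma deriv_zero_of_Gs (Φ : ℝ → ℂ) (hc : Continuous Φ) (hs : HasCompactSupport Φ) (α : ℂ) (d : ℕ)
    (h : ∀ k ≤ d, ∀ x, Gs Φ α k x = 0) (k : ℕ) (hk : k ≤ d) (n : ℤ) :
    iteratedDeriv k (fourierExt Φ) (α + n) = 0 := by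
  rw [um_fourier Φ hc hs, fourier_zero_of_per_zero _ (um_cont Φ hc α k) (um_cs Φ hs α k), mul_zero]
  intro x
  rw [um_of_Gs Φ hs α k x]
  rw [Finset.sum_eq_zero, mul_zero]
  intro i hi
  rw [h i (by have := Finset.mem_range.1 hi; omega) x, mul_zero]

lemma twisted (χ : Polynomial ℂ) (φ : ℝ → ℂ) (hc : Continuous φ) (hs : HasCompactSupport φ) (α : ℂ) (d : ℕ) (h : ℝ)
    (hχ : ∀ k ≤ d, ∀ x : ℝ, ∑ r ∈ Finset.range (χ.natDegree + 1), χ.coeff r * Gs φ α k (x + r * h) = 0)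
    (k : ℕ) (hk : k ≤ d) (n : ℤ) :
    iteratedDeriv k (fun w => χ.eval (Complex.exp (2 * (Real.pi : ℂ) * Complex.I * h * w)) * fourierExt φ w) (α + n) = 0 := by
  set Φ : ℝ → ℂ := fun x => ∑ r ∈ Finset.range (χ.natDegree + 1), χ.coeff r * φ (x + r * h) with hΦ
  have hΦc : Continuous Φ := by fun_prop
  have hsr : ∀ r : ℕ, HasCompactSupport (fun x => χ.coeff r * φ (x + r * h)) := by
    intro r
    have : HasCompactSupport (fun x => φ (x + r * h)) := hs.comp_homeomorph (Homeomorph.addRight (r * h))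
    exact this.mul_left
  obtain ⟨R, hR⟩ := cs_bound φ hs
  have hΦs : HasCompactSupport Φ := by
    obtain ⟨M, hM⟩ := exists_nat_ge (R + χ.natDegree * |h|)
    refine HasCompactSupport.intro (isCompact_Icc (a := -(M:ℝ)) (b := M)) fun x hx => ?_
    refine Finset.sum_eq_zero fun r hr => ?_
    rw [hR, mul_zero]
    have h1 : (M:ℝ) < |x| := by
      rw [Set.mem_Icc, ← abs_le] at hx
      exact not_le.1 hx
    have h2 : |x| ≤ |x + r * h| + |r * h| := by
      have := abs_sub (x + r * h) (r * h)
      simpa using this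
    have h3 : |r * h| ≤ χ.natDegree * |h| := by
      rw [abs_mul, Nat.abs_cast]
      have : (r:ℝ) ≤ χ.natDegree := by
        have := Finset.mem_range.1 hr
        exact_mod_cast (by omega : r ≤ χ.natDegree)
      gcongr
    linarith
  have hG : ∀ k ≤ d, ∀ x, Gs Φ α k x = 0 := by
    intro k hk x
    rw [← hχ k hk x]
    obtain ⟨R', hR'⟩ := cs_bound Φ hΦs
    obtain ⟨M, hM⟩ := exists_nat_ge (max (|x| + R') (|x| + χ.natDegree * |h| + R))
    rw [Gs_eq Φ R' hR' α k x M ((le_max_left _ _).trans hM)]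
    have h5 : ∀ r ∈ Finset.range (χ.natDegree + 1), χ.coeff r * Gs φ α k (x + r * h) = χ.coeff r * ∑ n ∈ Finset.Icc (-(M:ℤ)) M,
      ((n : ℂ) ^ k * Complex.exp (-(2 * (Real.pi : ℂ) * Complex.I * α * n))) * φ (x + r * h + n) := by
      intro r hr
      rw [Gs_eq φ R hR α k (x + r * h) M]
      have h3 : |r * h| ≤ χ.natDegree * |h| := by
        rw [abs_mul, Nat.abs_cast]
        have : (r:ℝ) ≤ χ.natDegree := by
          have := Finset.mem_range.1 hr
          exact_mod_cast (by omega : r ≤ χ.natDegree)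
        gcongr
      have := abs_add_le x (r * h)
      have := (le_max_right _ _).trans hM
      linarith
    rw [Finset.sum_congr rfl h5]
    simp_rw [Finset.mul_sum]
    rw [Finset.sum_comm]
    refine Finset.sum_congr rfl fun n _ => ?_
    rw [hΦ]
    simp only
    rw [Finset.mul_sum]
    refine Finset.sum_congr rfl fun r _ => ?_
    rw [add_right_comm x]
    ring
  have hft : (fun w => χ.eval (Complex.exp (2 * (Real.pi : ℂ) * Complex.I * h * w)) * fourierExt φ w) = fourierExt Φ := by
    ext w
    rw [Polynomial.eval_eq_sum_range, Finset.sum_mul]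
    have : fourierExt Φ w = ∑ r ∈ Finset.range (χ.natDegree + 1), ∫ x : ℝ, χ.coeff r * φ (x + r * h) * Complex.exp (-(2 * (Real.pi : ℂ) * Complex.I * (x : ℂ) * w)) := by
      unfold fourierExt
      rw [← integral_finsetSum]
      · simp_rw [hΦ, Finset.sum_mul]
      · intro r _
        exact ft_integrable _ (by fun_prop) (hsr r) _ (by fun_prop)
    rw [this]
    refine Finset.sum_congr rfl fun r _ => ?_
    unfold fourierExt
    rw [← integral_add_right_eq_self (fun x : ℝ => φ x * Complex.exp (-(2 * (Real.pi : ℂ) * Complex.I * (x : ℂ) * w))) (r * h),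
      ← integral_const_mul]
    congr 1
    ext x
    rw [← Complex.exp_nat_mul]
    have : Complex.exp (-(2 * (Real.pi : ℂ) * Complex.I * (x : ℂ) * w)) =
        Complex.exp (r * (2 * (Real.pi : ℂ) * Complex.I * h * w)) * Complex.exp (-(2 * (Real.pi : ℂ) * Complex.I * ((x + r * h : ℝ) : ℂ) * w)) := by
      rw [← Complex.exp_add]; congr 1; push_cast; ring
    rw [this]; ring
  rw [hft]
  exact deriv_zero_of_Gs Φ hΦc hΦs α d hG k hk n

lemma order_count (χ : Polynomial ℂ) (hχ : χ ≠ 0) (f : ℂ → ℂ) (hf : Differentiable ℂ f) (h : ℝ) (hh : h ≠ 0) (d : ℕ) (z : ℂ)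
    (h0 : ∀ k ≤ d, iteratedDeriv k (fun w => χ.eval (Complex.exp (2 * (Real.pi : ℂ) * Complex.I * h * w)) * f w) z = 0)
    (k0 : ℕ) (hne : iteratedDeriv k0 f z ≠ 0) :
    d + 1 ≤ χ.rootMultiplicity (Complex.exp (2 * (Real.pi : ℂ) * Complex.I * h * z)) + k0 := by
  set e : ℂ → ℂ := fun w => Complex.exp (2 * (Real.pi : ℂ) * Complex.I * h * w) with he
  have hed : Differentiable ℂ e := by fun_prop
  have hfa : AnalyticAt ℂ f z := hf.analyticAt z
  have hea : AnalyticAt ℂ e z := hed.analyticAt z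
  have hpa : AnalyticAt ℂ (fun w => χ.eval (e w)) z := (χ.differentiable.comp hed).analyticAt z
  have h1 : ((d + 1 : ℕ) : ℕ∞) ≤ analyticOrderAt (fun w => χ.eval (e w) * f w) z := by
    have hprodA : AnalyticAt ℂ (fun w => χ.eval (e w) * f w) z := hpa.mul hfa
    rw [natCast_le_analyticOrderAt_iff_iteratedDeriv_eq_zero hprodA]
    intro i hi
    exact h0 i (by omega)
  have h2 : analyticOrderAt f z ≤ k0 := by
    by_contra hcon
    push Not at hcon
    have : ((k0 + 1 : ℕ) : ℕ∞) ≤ analyticOrderAt f z := by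
      exact_mod_cast Order.add_one_le_of_lt hcon
    rw [natCast_le_analyticOrderAt_iff_iteratedDeriv_eq_zero hfa] at this
    exact hne (this k0 (by omega))
  obtain ⟨p, hp, hpn⟩ := Polynomial.exists_eq_pow_rootMultiplicity_mul_and_not_dvd χ hχ (e z)
  rw [Polynomial.dvd_iff_isRoot] at hpn
  set m := χ.rootMultiplicity (e z) with hm
  have hone : analyticOrderAt (fun w => e w - e z) z = 1 := by
    refine hea.analyticOrderAt_sub_eq_one_of_deriv_ne_zero ?_
    have hd : HasDerivAt e (e z * (2 * (Real.pi : ℂ) * Complex.I * h)) z := by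
      have := ((hasDerivAt_id z).const_mul (2 * (Real.pi : ℂ) * Complex.I * h)).cexp
      simpa [he] using this
    rw [hd.deriv]
    exact mul_ne_zero (Complex.exp_ne_zero _) (mul_ne_zero Complex.two_pi_I_ne_zero (by exact_mod_cast hh))
  have hsa : AnalyticAt ℂ (fun w => e w - e z) z := hea.sub analyticAt_const
  have hqa : AnalyticAt ℂ (fun w => p.eval (e w)) z := (p.differentiable.comp hed).analyticAt z
  have h3 : analyticOrderAt (fun w => χ.eval (e w)) z = m := by
    have e1 : (fun w => χ.eval (e w)) = (fun w => e w - e z) ^ m * fun w => p.eval (e w) := by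
      ext w
      conv_lhs => rw [hp]
      simp
    rw [e1, analyticOrderAt_mul (hsa.pow m) hqa, analyticOrderAt_pow hsa, hone,
      hqa.analyticOrderAt_eq_zero.2 hpn]
    simp
  have h4 : analyticOrderAt (fun w => χ.eval (e w) * f w) z = analyticOrderAt (fun w => χ.eval (e w)) z + analyticOrderAt f z :=
    analyticOrderAt_mul hpa hfa
  rw [h4, h3] at h1
  have h5 := h1.trans (add_le_add_right h2 _)
  exact_mod_cast h5

lemma exp_inj_small (α : ℂ) (j : ℕ) (l l' : ℤ) (hl : |l - l'| < 2 ^ j)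
    (h : Complex.exp (2 * (Real.pi : ℂ) * Complex.I * ((2:ℝ) ^ (-(j:ℤ)) : ℝ) * (α + l)) =
      Complex.exp (2 * (Real.pi : ℂ) * Complex.I * ((2:ℝ) ^ (-(j:ℤ)) : ℝ) * (α + l'))) : l = l' := by
  rw [Complex.exp_eq_exp_iff_exists_int] at h
  obtain ⟨n, hn⟩ := h
  have h1 : (2 * (Real.pi : ℂ) * Complex.I) * (((2:ℝ) ^ (-(j:ℤ)) : ℝ) * ((l:ℂ) - l')) = (2 * (Real.pi : ℂ) * Complex.I) * n := by
    linear_combination hn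
  have h2 := mul_left_cancel₀ Complex.two_pi_I_ne_zero h1
  have h3 : (2:ℝ) ^ (-(j:ℤ)) * ((l:ℝ) - l') = n := by exact_mod_cast h2
  have h4 : (l:ℝ) - l' = n * 2 ^ j := by
    rw [← h3, zpow_neg, zpow_natCast]
    field_simp
  have h5 : l - l' = n * 2 ^ j := by exact_mod_cast h4
  rw [h5, abs_mul, abs_of_pos (by positivity : (0:ℤ) < 2 ^ j)] at hl
  have h6 : |n| < 1 := by
    by_contra hcon
    push Not at hcon
    have : (2:ℤ) ^ j ≤ |n| * 2 ^ j := le_mul_of_one_le_left (by positivity) hcon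
    omega
  have : n = 0 := Int.abs_lt_one_iff.1 h6
  rw [this, zero_mul] at h5
  omega

lemma finite_count (N d : ℕ) (χ : Polynomial ℂ) (hχ : χ ≠ 0) (hdeg : χ.natDegree ≤ N)
    (t : Finset (ℕ × ℤ)) (lam : ℤ → ℂ) (hinj : ∀ a ∈ t, ∀ b ∈ t, lam a.2 = lam b.2 → a.2 = b.2)
    (hd : ∀ a ∈ t, a.1 ≤ d)
    (hm : ∀ a ∈ t, d + 1 ≤ χ.rootMultiplicity (lam a.2) + a.1) : t.card ≤ N := by
  classical
  have h1 : t.card = ∑ l ∈ t.image Prod.snd, (t.filter fun a => a.2 = l).card :=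
    Finset.card_eq_sum_card_image Prod.snd t
  have h2 : ∀ l ∈ t.image Prod.snd, (t.filter fun a => a.2 = l).card ≤ χ.rootMultiplicity (lam l) := by
    intro l _
    have : (t.filter fun a => a.2 = l).card ≤ (Finset.Icc (d + 1 - χ.rootMultiplicity (lam l)) d).card := by
      refine Finset.card_le_card_of_injOn Prod.fst ?_ ?_
      · intro a ha
        rw [Finset.mem_coe, Finset.mem_filter] at ha
        have h3 := hm a ha.1
        have h4 := hd a ha.1
        rw [ha.2] at h3
        rw [Finset.mem_coe, Finset.mem_Icc]
        omega
      · intro a ha b hb hab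
        rw [Finset.mem_coe, Finset.mem_filter] at ha hb
        exact Prod.ext hab (ha.2.trans hb.2.symm)
    rw [Nat.card_Icc] at this
    omega
  have hinj' : Set.InjOn lam (t.image Prod.snd : Finset ℤ) := by
    intro l hl l' hl' h
    rw [Finset.mem_coe, Finset.mem_image] at hl hl'
    obtain ⟨a, ha, rfl⟩ := hl
    obtain ⟨b, hb, rfl⟩ := hl'
    exact hinj a ha b hb h
  calc t.card ≤ ∑ l ∈ t.image Prod.snd, χ.rootMultiplicity (lam l) := by
        rw [h1]; exact Finset.sum_le_sum h2
    _ = ∑ z ∈ (t.image Prod.snd).image lam, χ.roots.count z := by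
        rw [Finset.sum_image hinj']
        simp
    _ ≤ χ.roots.card := by
        rw [← Multiset.sum_count_eq_card (s := (t.image Prod.snd).image lam ∪ χ.roots.toFinset)
          (fun a ha => Finset.mem_union_right _ (Multiset.mem_toFinset.2 ha))]
        exact Finset.sum_le_sum_of_subset Finset.subset_union_left
    _ ≤ χ.natDegree := χ.card_roots'
    _ ≤ N := hdeg

/-- Let `a_j` be trigonometric polynomials of degree ≤ N with `a_j(0) = 1` and
`sup_ℝ |a_j| ≤ C`, and let `φ̂(z) = Π_{j=1}^∞ a_j(2^{−j}z)`. If for some `d ≤ N` the sequences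
`ℓ ↦ φ̂^{(k)}(α+ℓ)`, `k = 0,…,d`, decay exponentially, then
`{(k,ℓ) : 0 ≤ k ≤ d, ℓ ∈ ℤ, φ̂^{(k)}(α+ℓ) ≠ 0}` has at most `N` elements. -/
theorem stmt_16 (N : ℕ) (C : ℝ) (hC : 0 < C)
    (coef : ℕ → ℕ → ℂ) (A : ℕ → ℂ → ℂ)
    (hA : ∀ j : ℕ, ∀ y : ℂ, A j y =
      ∑ m ∈ Finset.range (N + 1), coef j m * Complex.exp (-(2 * (Real.pi : ℂ) * Complex.I * (m : ℂ) * y)))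
    (hA0 : ∀ j : ℕ, A j 0 = 1)
    (hAbd : ∀ j : ℕ, ∀ y : ℝ, ‖A j ((y : ℂ))‖ ≤ C)
    (φ : ℝ → ℂ) (hcont : Continuous φ) (hint : Integrable φ) (hsupp : HasCompactSupport φ)
    (hprod : ∀ z : ℂ, Filter.Tendsto
      (fun J : ℕ => ∏ j ∈ Finset.Icc 1 J, A j ((2 : ℂ) ^ (-(j : ℤ)) * z))
      Filter.atTop (nhds (fourierExt φ z)))
    (α : ℂ) (d : ℕ) (hd : d ≤ N)
    (C' : ℝ) (hC' : 0 < C') (q : ℝ) (hq : q ∈ Set.Ioo (0 : ℝ) 1)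
    (hdecay : ∀ k ≤ d, ∀ ℓ : ℤ,
      ‖iteratedDeriv k (fourierExt φ) (α + (ℓ : ℂ))‖ ≤ C' * q ^ ℓ.natAbs) :
    ({x : ℕ × ℤ | x.1 ≤ d ∧ iteratedDeriv x.1 (fourierExt φ) (α + (x.2 : ℂ)) ≠ 0}).Finite ∧
      ({x : ℕ × ℤ | x.1 ≤ d ∧ iteratedDeriv x.1 (fourierExt φ) (α + (x.2 : ℂ)) ≠ 0}).ncard ≤ N := by
  have han := Gs_analytic φ hcont hsupp α d C' q hq hdecay
  set S := {x : ℕ × ℤ | x.1 ≤ d ∧ iteratedDeriv x.1 (fourierExt φ) (α + (x.2 : ℂ)) ≠ 0} with hS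
  have key : ∀ t : Finset (ℕ × ℤ), (t : Set (ℕ × ℤ)) ⊆ S → t.card ≤ N := by
    intro t ht
    obtain ⟨B, hB⟩ : ∃ B : ℕ, ∀ a ∈ t, a.2.natAbs ≤ B :=
      ⟨t.sup fun a => a.2.natAbs, fun a ha => Finset.le_sup (f := fun a : ℕ × ℤ => a.2.natAbs) ha⟩
    set j := 2 * B with hj
    have hj2 : (2 * B : ℤ) < 2 ^ j := by
      have := Nat.lt_two_pow_self (n := 2 * B)
      exact_mod_cast this
    obtain ⟨b, hb⟩ := kernel_lemma N C coef A hA hA0 hAbd φ hcont hint hsupp hprod α d j han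
    obtain ⟨χ, hmon, hdeg, hχ⟩ := poly_of_kernel N d ((2:ℝ) ^ (-(j:ℤ))) (Gs φ α) b hb
    refine finite_count N d χ hmon.ne_zero hdeg t
      (fun l => Complex.exp (2 * (Real.pi : ℂ) * Complex.I * ((2:ℝ) ^ (-(j:ℤ)) : ℝ) * (α + l))) ?_ ?_ ?_
    · intro a ha b hb hab
      refine exp_inj_small α j a.2 b.2 ?_ hab
      have h1 := hB a ha
      have h2 := hB b hb
      refine lt_of_le_of_lt ?_ hj2
      rw [abs_le]
      omega
    · exact fun a ha => (ht ha).1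
    · intro a ha
      exact order_count χ hmon.ne_zero (fourierExt φ) (ft_differentiable φ hcont hsupp) ((2:ℝ) ^ (-(j:ℤ)))
        (by positivity) d (α + a.2)
        (fun k hk => twisted χ φ hcont hsupp α d _ hχ k hk a.2) a.1 (ht ha).2
  have hfin : S.Finite := by
    by_contra hinf
    obtain ⟨t, ht, hc⟩ := Set.Infinite.exists_subset_card_eq hinf (N + 1)
    have := key t ht
    omega
  refine ⟨hfin, ?_⟩
  rw [Set.ncard_eq_toFinset_card S hfin]
  exact key _ (by simp)
end
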